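/- Let n ≥ 10 be an integer. If G is a connected simple graph on n vertices with dissociation number n−2 that attains the minimum spectral radius among all connected simple graphs on n vertices with dissociation number n−2, then G is isomorphic to H(n). -/

import Mathlib

/-- `S` is a dissociation set of `G`: the subgraph induced by `S` has maximum degree ≤ 1. -/
def IsDissocSet {V : Type} (G : SimpleGraph V) (S : Set V) : Prop :=
  ∀ v ∈ S, ({u ∈ S | G.Adj v u}).ncard ≤ 1

/-- The dissociation number of `G`: the maximum cardinality of a dissociation set. -/
noncomputable def dissNum {V : Type} [Fintype V] (G : SimpleGraph V) : ℕ :=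
  sSup {k | ∃ S : Set V, IsDissocSet G S ∧ S.ncard = k}

open scoped Classical in
/-- The (real) adjacency matrix of a simple graph. -/
noncomputable def adjMat {V : Type} [Fintype V] (G : SimpleGraph V) : Matrix V V ℝ :=
  Matrix.of fun i j => if G.Adj i j then 1 else 0

/-- The spectral radius of a simple graph: the largest eigenvalue of its adjacency matrix. -/
noncomputable def specRad {V : Type} [Fintype V] (G : SimpleGraph V) : ℝ :=
  sSup {t : ℝ | ∃ v : V → ℝ, v ≠ 0 ∧ (adjMat G).mulVec v = t • v}

/-- `G3 r s p q` is the tree obtained from a path `v₁ v₃ v₄ v₂` on 4 vertices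
(`v₁ = 0, v₃ = 1, v₄ = 2, v₂ = 3`) by attaching `r` pendant vertices and `s` pendant
paths of length 2 to `v₁`, and `p` pendant vertices and `q` pendant paths of length 2
to `v₂`. It has order `r + p + 2s + 2q + 4`. -/
def G3 (r s p q : ℕ) :
    SimpleGraph (Fin 4 ⊕ ((Fin r ⊕ Fin s × Fin 2) ⊕ (Fin p ⊕ Fin q × Fin 2))) :=
  SimpleGraph.fromRel (fun a b =>
    (∃ i : Fin 3, a = Sum.inl i.castSucc ∧ b = Sum.inl i.succ) ∨
    (∃ i : Fin r, a = Sum.inl 0 ∧ b = Sum.inr (Sum.inl (Sum.inl i))) ∨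
    (∃ j : Fin s, a = Sum.inl 0 ∧ b = Sum.inr (Sum.inl (Sum.inr (j, 0)))) ∨
    (∃ j : Fin s, a = Sum.inr (Sum.inl (Sum.inr (j, 0))) ∧
      b = Sum.inr (Sum.inl (Sum.inr (j, 1)))) ∨
    (∃ i : Fin p, a = Sum.inl 3 ∧ b = Sum.inr (Sum.inr (Sum.inl i))) ∨
    (∃ j : Fin q, a = Sum.inl 3 ∧ b = Sum.inr (Sum.inr (Sum.inr (j, 0)))) ∨
    (∃ j : Fin q, a = Sum.inr (Sum.inr (Sum.inr (j, 0))) ∧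
      b = Sum.inr (Sum.inr (Sum.inr (j, 1)))))

/-!
A connected graph `G` of order `n` and dissociation number `n - 2` consists of two hubs and a graph
of maximum degree at most one, each component of which is joined to a hub. So `G` contains as a
spanning subgraph a short link between the hubs (an edge, a path on three or four vertices, or a
claw two of whose leaves are the hubs) with pendant vertices and pendant paths of length two
attached to the hubs.

Let `t` be the spectral radius of `H(n)`. Prescribing values `a, b > 0` at the hubs and solving the
eigenvalue equation for `t` everywhere else gives a positive vector, whose Rayleigh quotient is at
most `t` if and only if `2 * m * a * b ≤ f * a ^ 2 + g * b ^ 2`. Here `m` depends on the link, and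
the *slacks* `f` and `g` of the hubs decrease affinely in the numbers of attached pieces.
If `specRad G ≤ t`, then `a = b` yields `2 * m ≤ f + g`, which by counting vertices leaves only the
path on four vertices as a link, with as many pendant paths as in `H(n)`. The sum `f + g` is then
determined, and `m ^ 2 ≤ f * g` forces the balanced distribution of the pendant paths.
So `G` contains `H(n)` as a spanning subgraph, and a proper supergraph would have a larger spectral
radius because the Perron vector of `H(n)` is positive.
-/

open Matrix Set

/-! ### Spectral radius -/

section Spectral

variable {V W : Type} [Fintype V] [Fintype W] {t : ℝ}

lemma eigenvalue_le_of_mulVec_le {A : Matrix V V ℝ} (hA : A.IsSymm) (hA₀ : ∀ i j, 0 ≤ A i j)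
    {z : V → ℝ} (hz : ∀ i, 0 < z i) (hAz : A *ᵥ z ≤ t • z) {s : ℝ} {v : V → ℝ} (hv : v ≠ 0)
    (hs : A *ᵥ v = s • v) : s ≤ t := by
  have habs : s • |v| ≤ A *ᵥ |v| := fun i ↦ calc
    s * |v i| ≤ |s * v i| := by rw [abs_mul]; gcongr; exact le_abs_self s
    _ = |∑ j, A i j * v j| := congrArg abs (congrFun hs i).symm
    _ ≤ ∑ j, |A i j * v j| := Finset.abs_sum_le_sum_abs _ _
    _ = (A *ᵥ |v|) i := by simp [mulVec, dotProduct, abs_mul, abs_of_nonneg (hA₀ i _)]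
  have hz₀ : 0 ≤ z := fun i ↦ (hz i).le
  have hpos : 0 < z ⬝ᵥ |v| := by
    obtain ⟨i, hi⟩ := Function.ne_iff.mp hv
    exact Finset.sum_pos' (fun j _ ↦ mul_nonneg (hz₀ j) (abs_nonneg _))
      ⟨i, Finset.mem_univ i, mul_pos (hz i) (abs_pos.mpr hi)⟩
  refine le_of_mul_le_mul_right ?_ hpos
  calc s * (z ⬝ᵥ |v|) = z ⬝ᵥ (s • |v|) := by rw [dotProduct_smul, smul_eq_mul]
    _ ≤ z ⬝ᵥ A *ᵥ |v| := dotProduct_le_dotProduct_of_nonneg_left habs hz₀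
    _ = (A *ᵥ z) ⬝ᵥ |v| := by rw [dotProduct_mulVec, ← mulVec_transpose, hA.eq]
    _ ≤ (t • z) ⬝ᵥ |v| := dotProduct_le_dotProduct_of_nonneg_right hAz (abs_nonneg v)
    _ = t * (z ⬝ᵥ |v|) := by rw [smul_dotProduct, smul_eq_mul]

lemma dotProduct_mulVec_le_of_eigenvalue_le {A : Matrix V V ℝ} (hA : A.IsSymm)
    (ht : ∀ s : ℝ, ∀ v : V → ℝ, v ≠ 0 → A *ᵥ v = s • v → s ≤ t) (z : V → ℝ) :
    z ⬝ᵥ A *ᵥ z ≤ t * (z ⬝ᵥ z) := by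
  classical
  have hpsd : (algebraMap ℝ (Matrix V V ℝ) t - A).PosSemidef := by
    refine posSemidef_iff_isHermitian_and_spectrum_nonneg.mpr
      ⟨(isHermitian_diagonal _).sub (isHermitian_iff_isSymm.mpr hA), ?_⟩
    rw [← spectrum.singleton_sub_eq]
    rintro _ ⟨_, rfl, s, hs, rfl⟩
    rw [← spectrum_toLin', ← Module.End.hasEigenvalue_iff_mem_spectrum] at hs
    obtain ⟨v, hv⟩ := hs.exists_hasEigenvector
    exact sub_nonneg.mpr (ht s v hv.2 (by simpa using hv.apply_eq_smul))
  have := hpsd.dotProduct_mulVec_nonneg z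
  rw [sub_mulVec, dotProduct_sub, Algebra.algebraMap_eq_smul_one, smul_mulVec, one_mulVec] at this
  simpa using this

lemma adjMat_eq_adjMatrix (G : SimpleGraph V) [DecidableRel G.Adj] :
    adjMat G = G.adjMatrix ℝ := by
  ext i j
  simp [adjMat, SimpleGraph.adjMatrix_apply]

lemma isSymm_adjMat (G : SimpleGraph V) : (adjMat G).IsSymm := by
  classical
  rw [adjMat_eq_adjMatrix]
  exact G.isSymm_adjMatrix

lemma adjMat_nonneg (G : SimpleGraph V) (i j : V) : 0 ≤ adjMat G i j := by
  classical
  rw [adjMat_eq_adjMatrix, SimpleGraph.adjMatrix_apply]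
  positivity

open scoped Classical in
lemma adjMat_mulVec_apply (G : SimpleGraph V) (z : V → ℝ) (i : V) :
    (adjMat G *ᵥ z) i = ∑ j, if G.Adj i j then z j else 0 := by
  simp [adjMat, mulVec, dotProduct]

lemma adjMat_mulVec_comp_iso {G : SimpleGraph V} {H : SimpleGraph W} (e : G ≃g H) (z : W → ℝ) :
    adjMat G *ᵥ (z ∘ e) = (adjMat H *ᵥ z) ∘ e := by
  classical
  ext i
  simp only [Function.comp_apply, adjMat_mulVec_apply]
  exact Fintype.sum_equiv e.toEquiv _ _ fun j ↦ if_congr e.map_adj_iff.symm rfl rfl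

lemma specRad_le_of_mulVec_le {G : SimpleGraph V} (ht : 0 ≤ t) {z : V → ℝ} (hz : ∀ i, 0 < z i)
    (hAz : adjMat G *ᵥ z ≤ t • z) : specRad G ≤ t :=
  Real.sSup_le (fun _ ⟨_, hv, hs⟩ ↦
    eigenvalue_le_of_mulVec_le (isSymm_adjMat G) (adjMat_nonneg G) hz hAz hv hs) ht

lemma eigenvalue_le_specRad {G : SimpleGraph V} {s : ℝ} {v : V → ℝ} (hv : v ≠ 0)
    (hs : adjMat G *ᵥ v = s • v) : s ≤ specRad G := by
  classical
  refine le_csSup ⟨Fintype.card V, ?_⟩ ⟨v, hv, hs⟩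
  rintro r ⟨w, hw, hr⟩
  refine eigenvalue_le_of_mulVec_le (isSymm_adjMat G) (adjMat_nonneg G)
    (z := fun _ ↦ 1) (fun _ ↦ one_pos) (fun i ↦ ?_) hw hr
  rw [adjMat_eq_adjMatrix, SimpleGraph.adjMatrix_mulVec_apply]
  simpa using (G.degree_lt_card_verts i).le

lemma dotProduct_adjMat_mulVec_le (G : SimpleGraph V) (z : V → ℝ) :
    z ⬝ᵥ adjMat G *ᵥ z ≤ specRad G * (z ⬝ᵥ z) :=
  dotProduct_mulVec_le_of_eigenvalue_le (isSymm_adjMat G)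
    (fun _ _ hv hs ↦ eigenvalue_le_specRad hv hs) z

lemma specRad_congr {G : SimpleGraph V} {H : SimpleGraph W} (e : G ≃g H) :
    specRad G = specRad H := by
  unfold specRad
  congr 1
  ext s
  constructor
  · rintro ⟨v, hv, hs⟩
    refine ⟨v ∘ e.symm, fun h ↦ hv ?_, ?_⟩
    · simpa [Function.comp_assoc] using congrArg (· ∘ e) h
    · rw [adjMat_mulVec_comp_iso, hs]; rfl
  · rintro ⟨v, hv, hs⟩
    refine ⟨v ∘ e, fun h ↦ hv ?_, ?_⟩
    · simpa [Function.comp_assoc] using congrArg (· ∘ e.symm) h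
    · rw [adjMat_mulVec_comp_iso, hs]; rfl

variable {G H : SimpleGraph V}

lemma adjMat_mono (hle : H ≤ G) (i j : V) : adjMat H i j ≤ adjMat G i j := by
  classical
  simp only [adjMat_eq_adjMatrix, SimpleGraph.adjMatrix_apply]
  split_ifs with hH hG
  exacts [le_rfl, absurd (hle hH) hG, zero_le_one, le_rfl]

lemma dotProduct_mulVec_le_of_le (hle : H ≤ G) {z : V → ℝ} (hz : 0 ≤ z) :
    z ⬝ᵥ adjMat H *ᵥ z ≤ specRad G * (z ⬝ᵥ z) :=
  (dotProduct_le_dotProduct_of_nonneg_left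
    (fun i ↦ dotProduct_le_dotProduct_of_nonneg_right (adjMat_mono hle i) hz) hz).trans
    (dotProduct_adjMat_mulVec_le G z)

/- A Perron vector of `H` has the same Rayleigh quotient on both graphs, while an extra edge of `G`
would increase it. -/
lemma eq_of_le_of_specRad_le (hle : H ≤ G) {z : V → ℝ} (hz : ∀ i, 0 < z i)
    (hHz : adjMat H *ᵥ z = t • z) (ht : specRad G ≤ t) : H = G := by
  have hz₀ : 0 ≤ z := fun i ↦ (hz i).le
  have hrow (i : V) : (adjMat H *ᵥ z) i ≤ (adjMat G *ᵥ z) i :=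
    dotProduct_le_dotProduct_of_nonneg_right (adjMat_mono hle i) hz₀
  refine le_antisymm hle fun i j hij ↦ by_contra fun hHij ↦ ?_
  have hentry : adjMat H i j < adjMat G i j := by simp [adjMat, hij, hHij]
  have hrow' : (adjMat H *ᵥ z) i < (adjMat G *ᵥ z) i :=
    Finset.sum_lt_sum (fun k _ ↦ mul_le_mul_of_nonneg_right (adjMat_mono hle i k) (hz₀ k))
      ⟨j, Finset.mem_univ j, mul_lt_mul_of_pos_right hentry (hz j)⟩
  have hlt : z ⬝ᵥ adjMat H *ᵥ z < z ⬝ᵥ adjMat G *ᵥ z :=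
    Finset.sum_lt_sum (fun k _ ↦ mul_le_mul_of_nonneg_left (hrow k) (hz₀ k))
      ⟨i, Finset.mem_univ i, mul_lt_mul_of_pos_left hrow' (hz i)⟩
  refine hlt.not_ge ((dotProduct_adjMat_mulVec_le G z).trans ?_)
  rw [hHz, dotProduct_smul, smul_eq_mul]
  exact mul_le_mul_of_nonneg_right ht (dotProduct_nonneg_of_nonneg hz₀ hz₀)

end Spectral

/-! ### Dissociation sets -/

section Dissociation

variable {V W : Type} {G : SimpleGraph V} {H : SimpleGraph W} {S : Set V}

lemma isDissocSet_of_forall_adj {σ : V → V} (h : ∀ v ∈ S, ∀ w ∈ S, G.Adj v w → σ v = w) :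
    IsDissocSet G S := fun v hv ↦
  (ncard_le_ncard (t := {σ v}) fun w hw ↦ (h v hv w hw.1 hw.2).symm).trans_eq (ncard_singleton _)

lemma IsDissocSet.preimage_iso (e : G ≃g H) {T : Set W} (hT : IsDissocSet H T) :
    IsDissocSet G (e ⁻¹' T) := fun v hv ↦ by
  have hset : {u ∈ e ⁻¹' T | G.Adj v u} = e ⁻¹' {u ∈ T | H.Adj (e v) u} := by
    ext u
    simp [e.map_adj_iff]
  rw [hset, ncard_preimage_of_injective_subset_range e.injective fun u _ ↦ e.surjective u]
  exact hT (e v) hv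

variable [Finite V]

lemma IsDissocSet.eq_of_adj_of_adj (hS : IsDissocSet G S) {v w w' : V} (hv : v ∈ S) (hw : w ∈ S)
    (hw' : w' ∈ S) (h : G.Adj v w) (h' : G.Adj v w') : w = w' :=
  (ncard_le_one (toFinite _)).mp (hS v hv) w ⟨hw, h⟩ w' ⟨hw', h'⟩

lemma IsDissocSet.ncard_le_of_subset_neighborSet (hS : IsDissocSet G S) {v : V} (hv : v ∈ S)
    {N : Set V} (hN : N ⊆ G.neighborSet v) : N.ncard ≤ 1 + (N \ S).ncard := by
  rw [← ncard_inter_add_ncard_sdiff_eq_ncard N S]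
  gcongr
  exact (ncard_le_ncard (t := {u ∈ S | G.Adj v u}) fun w hw ↦ ⟨hw.2, hN hw.1⟩).trans (hS v hv)

lemma IsDissocSet.exists_involutive (hS : IsDissocSet G S) :
    ∃ σ : V → V, σ.Involutive ∧ (∀ v ∉ S, σ v = v) ∧
      ∀ v ∈ S, ∀ w ∈ S, G.Adj v w ↔ v ≠ w ∧ σ v = w := by
  have hex (v : V) : ∃ w, (v ∈ S ∧ w ∈ S ∧ G.Adj v w) ∨
      (w = v ∧ ∀ x ∈ S, v ∈ S → ¬ G.Adj v x) := by
    by_cases h : v ∈ S ∧ ∃ w ∈ S, G.Adj v w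
    · exact ⟨h.2.choose, .inl ⟨h.1, h.2.choose_spec⟩⟩
    · exact ⟨v, .inr ⟨rfl, fun x hx hv hvx ↦ h ⟨hv, x, hx, hvx⟩⟩⟩
  choose σ hσ using hex
  have huniq {v w w' : V} := hS.eq_of_adj_of_adj (v := v) (w := w) (w' := w')
  refine ⟨σ, fun v ↦ ?_, fun v hv ↦ ?_, fun v hv w hw ↦ ⟨fun h ↦ ⟨h.ne, ?_⟩, fun h ↦ ?_⟩⟩
  · rcases hσ v with ⟨hv, hσv, hadj⟩ | ⟨hσv, -⟩
    · rcases hσ (σ v) with ⟨-, hσσ, hadj'⟩ | ⟨-, hno⟩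
      · exact huniq hσv hσσ hv hadj' hadj.symm
      · exact absurd hadj.symm (hno v hv hσv)
    · rw [hσv, hσv]
  · exact ((hσ v).resolve_left fun h ↦ hv h.1).1
  · rcases hσ v with ⟨-, hσv, hadj⟩ | ⟨-, hno⟩
    · exact huniq hv hσv hw hadj h
    · exact absurd h (hno w hw hv)
  · rcases hσ v with ⟨-, -, hadj⟩ | ⟨hσv, -⟩
    · exact h.2 ▸ hadj
    · exact absurd (hσv.symm.trans h.2) h.1

end Dissociation

section DissociationNumber

variable {V W : Type} [Fintype V] [Fintype W] {G : SimpleGraph V} {H : SimpleGraph W}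

lemma bddAbove_ncard_isDissocSet {V : Type} [Finite V] (G : SimpleGraph V) :
    BddAbove {k | ∃ S : Set V, IsDissocSet G S ∧ S.ncard = k} := by
  refine ⟨Nat.card V, ?_⟩
  rintro _ ⟨S, -, rfl⟩
  exact ncard_le_card S

lemma exists_isDissocSet_ncard_eq_dissNum (G : SimpleGraph V) :
    ∃ S : Set V, IsDissocSet G S ∧ S.ncard = dissNum G :=
  Nat.sSup_mem (s := {k | ∃ S : Set V, IsDissocSet G S ∧ S.ncard = k})
    ⟨0, ∅, fun _ h ↦ h.elim, ncard_empty V⟩ (bddAbove_ncard_isDissocSet G)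

lemma IsDissocSet.ncard_le_dissNum {S : Set V} (hS : IsDissocSet G S) : S.ncard ≤ dissNum G :=
  le_csSup (bddAbove_ncard_isDissocSet G) ⟨S, hS, rfl⟩

lemma dissNum_le_of_iso (e : G ≃g H) : dissNum H ≤ dissNum G := by
  obtain ⟨T, hT, hcard⟩ := exists_isDissocSet_ncard_eq_dissNum H
  rw [← hcard,
    ← ncard_preimage_of_injective_subset_range e.injective fun u _ ↦ e.surjective u]
  exact (hT.preimage_iso e).ncard_le_dissNum

lemma dissNum_congr (e : G ≃g H) : dissNum G = dissNum H :=
  (dissNum_le_of_iso e.symm).antisymm (dissNum_le_of_iso e)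

end DissociationNumber

/-! ### Attaching pendant vertices and pendant paths -/

section AttachPendants

variable {ι R S : Type}

/-- The graph obtained from `L` by attaching a pendant vertex at `α r` for every `r : R` and a
pendant path `(s, 0), (s, 1)` of length 2 at `β s` for every `s : S`. -/
def attachPendants (L : SimpleGraph ι) (α : R → ι) (β : S → ι) :
    SimpleGraph (ι ⊕ (R ⊕ S × Fin 2)) where
  Adj
    | .inl i, .inl j => L.Adj i j
    | .inl i, .inr (.inl r) => i = α r
    | .inr (.inl r), .inl i => i = α r
    | .inl i, .inr (.inr (s, k)) => i = β s ∧ k = 0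
    | .inr (.inr (s, k)), .inl i => i = β s ∧ k = 0
    | .inr (.inr (s, k)), .inr (.inr (s', k')) => s = s' ∧ k ≠ k'
    | .inr (.inl _), .inr _ => False
    | .inr (.inr _), .inr (.inl _) => False
  symm := ⟨by
    rintro (i | r | ⟨s, k⟩) (j | r' | ⟨s', k'⟩) h
    exacts [L.adj_symm h, h, h, h, h, h, h, h, ⟨h.1.symm, h.2.symm⟩]⟩
  loopless := ⟨by
    rintro (i | r | ⟨s, k⟩) h
    exacts [L.loopless.irrefl i h, h, h.2 rfl]⟩

namespace attachPendants

variable {L : SimpleGraph ι} {α : R → ι} {β : S → ι} {i j : ι} {r r' : R} {s s' : S}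
  {k k' : Fin 2}

@[simp] lemma adj_inl_inl : (attachPendants L α β).Adj (.inl i) (.inl j) ↔ L.Adj i j := .rfl

@[simp] lemma adj_inl_leaf : (attachPendants L α β).Adj (.inl i) (.inr (.inl r)) ↔ i = α r := .rfl

@[simp] lemma adj_leaf_inl : (attachPendants L α β).Adj (.inr (.inl r)) (.inl i) ↔ i = α r := .rfl

@[simp] lemma adj_inl_path :
    (attachPendants L α β).Adj (.inl i) (.inr (.inr (s, k))) ↔ i = β s ∧ k = 0 := .rfl

@[simp] lemma adj_path_inl :
    (attachPendants L α β).Adj (.inr (.inr (s, k))) (.inl i) ↔ i = β s ∧ k = 0 := .rfl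

@[simp] lemma adj_path_path :
    (attachPendants L α β).Adj (.inr (.inr (s, k))) (.inr (.inr (s', k'))) ↔ s = s' ∧ k ≠ k' :=
  .rfl

@[simp] lemma not_adj_leaf_inr {x : R ⊕ S × Fin 2} :
    ¬ (attachPendants L α β).Adj (.inr (.inl r)) (.inr x) := id

@[simp] lemma not_adj_path_leaf {x : S × Fin 2} :
    ¬ (attachPendants L α β).Adj (.inr (.inr x)) (.inr (.inl r)) := id

lemma connected (hL : L.Connected) : (attachPendants L α β).Connected := by
  obtain ⟨i₀⟩ := hL.nonempty
  have hinl (i : ι) : (attachPendants L α β).Reachable (.inl i) (.inl i₀) :=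
    (hL.preconnected i i₀).map ⟨Sum.inl, id⟩
  have hpath (s : S) : (attachPendants L α β).Reachable (.inr (.inr (s, 0))) (.inl i₀) :=
    (SimpleGraph.Adj.reachable (by simp : (attachPendants L α β).Adj _ (.inl (β s)))).trans (hinl _)
  refine SimpleGraph.connected_iff_exists_forall_reachable _ |>.mpr ⟨.inl i₀, fun v ↦ .symm ?_⟩
  rcases v with i | r | ⟨s, k⟩
  · exact hinl i
  · exact (SimpleGraph.Adj.reachable (by simp : (attachPendants L α β).Adj _ (.inl (α r)))).trans
      (hinl _)
  · obtain rfl | rfl : k = 0 ∨ k = 1 := by omega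
    · exact hpath s
    · exact (SimpleGraph.Adj.reachable
        (by simp : (attachPendants L α β).Adj _ (.inr (.inr (s, 0))))).trans (hpath s)

/-- An isomorphism of the base graphs and reindexings of the attached pendant vertices and paths
that respect the points of attachment induce an isomorphism. -/
def congr {ι' R' S' : Type} {L' : SimpleGraph ι'} {α' : R' → ι'} {β' : S' → ι'} (e : L ≃g L')
    (eR : R ≃ R') (eS : S ≃ S') (hα : ∀ r, α' (eR r) = e (α r)) (hβ : ∀ s, β' (eS s) = e (β s)) :
    attachPendants L α β ≃g attachPendants L' α' β' where
  toEquiv := e.toEquiv.sumCongr (eR.sumCongr (eS.prodCongr (.refl _)))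
  map_rel_iff' := by
    rintro (i | r | ⟨s, k⟩) (j | r' | ⟨s', k'⟩) <;> simp [hα, hβ, e.map_adj_iff]

lemma nonempty_iso_of_ncard_fiber_eq [Finite R] [Finite S] {R' S' : Type} [Finite R'] [Finite S']
    {α' : R' → ι} {β' : S' → ι} (hα : ∀ i, (α ⁻¹' {i}).ncard = (α' ⁻¹' {i}).ncard)
    (hβ : ∀ i, (β ⁻¹' {i}).ncard = (β' ⁻¹' {i}).ncard) :
    Nonempty (attachPendants L α β ≃g attachPendants L α' β') := by
  let eR (i : ι) : {r // α r = i} ≃ {r // α' r = i} := (Finite.card_eq.mp (hα i)).some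
  let eS (i : ι) : {s // β s = i} ≃ {s // β' s = i} := (Finite.card_eq.mp (hβ i)).some
  exact ⟨congr .refl (Equiv.ofFiberEquiv eR) (Equiv.ofFiberEquiv eS)
    (Equiv.ofFiberEquiv_map eR) (Equiv.ofFiberEquiv_map eS)⟩

end attachPendants

end AttachPendants

section Caterpillar

open SimpleGraph

variable {R S : Type} {α : R → Fin 4} {β : S → Fin 4}

lemma isDissocSet_compl_hubs (hα : ∀ r, α r = 0 ∨ α r = 3) (hβ : ∀ s, β s = 0 ∨ β s = 3) :
    IsDissocSet (attachPendants (pathGraph 4) α β) {.inl 0, .inl 3}ᶜ := by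
  refine isDissocSet_of_forall_adj
    (σ := Sum.map Fin.rev (Sum.map id (Prod.map id Fin.rev))) ?_
  rintro (i | r | ⟨s, k⟩) hv (j | r' | ⟨s', k'⟩) hw h
  · fin_cases i <;> fin_cases j <;> simp_all [pathGraph_adj]
  · grind [attachPendants.adj_inl_leaf]
  · grind [attachPendants.adj_inl_path]
  · grind [attachPendants.adj_leaf_inl]
  · exact h.elim
  · exact h.elim
  · grind [attachPendants.adj_path_inl]
  · exact h.elim
  · obtain ⟨rfl, hk⟩ := h
    fin_cases k <;> fin_cases k' <;> simp_all

lemma two_le_ncard_compl_of_isDissocSet [Finite R] [Finite S]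
    {s s' s'' : S} (hne : s ≠ s') (hs : β s = 0) (hs' : β s' = 0) (hs'' : β s'' = 3)
    {T : Set (Fin 4 ⊕ (R ⊕ S × Fin 2))} (hT : IsDissocSet (attachPendants (pathGraph 4) α β) T) :
    2 ≤ Tᶜ.ncard := by
  by_cases h₀ : .inl 0 ∈ T
  · let N : Set (Fin 4 ⊕ (R ⊕ S × Fin 2)) :=
      {.inl 1, .inr (.inr (s, 0)), .inr (.inr (s', 0))}
    have hN : N.ncard = 3 := ncard_eq_three.mpr ⟨_, _, _, by simp, by simp, by simpa, rfl⟩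
    have hsub : N ⊆ (attachPendants (pathGraph 4) α β).neighborSet (.inl 0) := by
      rintro _ (rfl | rfl | rfl) <;> simp [hs, hs', pathGraph_adj]
    have hle := hT.ncard_le_of_subset_neighborSet h₀ hsub
    have := ncard_le_ncard (s := N \ T) (t := Tᶜ) fun _ h ↦ h.2
    omega
  by_cases h₃ : .inl 3 ∈ T
  · let N : Set (Fin 4 ⊕ (R ⊕ S × Fin 2)) := {.inl 2, .inr (.inr (s'', 0))}
    have hN : N.ncard = 2 := ncard_pair (by simp)
    have hsub : N ⊆ (attachPendants (pathGraph 4) α β).neighborSet (.inl 3) := by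
      rintro _ (rfl | rfl) <;> simp [hs'', pathGraph_adj]
    have hle := hT.ncard_le_of_subset_neighborSet h₃ hsub
    have := ncard_lt_ncard (s := N \ T) (t := Tᶜ)
      ⟨fun _ h ↦ h.2, fun h ↦ by simpa [N] using (h h₀).1⟩
    omega
  · calc 2 = ({.inl 0, .inl 3} : Set (Fin 4 ⊕ (R ⊕ S × Fin 2))).ncard :=
        (ncard_pair (by simp)).symm
      _ ≤ Tᶜ.ncard := ncard_le_ncard (by rintro _ (rfl | rfl) <;> assumption)

lemma dissNum_attachPendants_pathGraph_four [Fintype R] [Fintype S]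
    (hα : ∀ r, α r = 0 ∨ α r = 3) (hβ : ∀ s, β s = 0 ∨ β s = 3)
    {s s' s'' : S} (hne : s ≠ s') (hs : β s = 0) (hs' : β s' = 0) (hs'' : β s'' = 3) :
    dissNum (attachPendants (pathGraph 4) α β) = Nat.card (Fin 4 ⊕ (R ⊕ S × Fin 2)) - 2 := by
  obtain ⟨T, hT, hcard⟩ := exists_isDissocSet_ncard_eq_dissNum (attachPendants (pathGraph 4) α β)
  have hlower := (isDissocSet_compl_hubs hα hβ).ncard_le_dissNum
  have hupper := two_le_ncard_compl_of_isDissocSet hne hs hs' hs'' hT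
  have hhubs : ({.inl 0, .inl 3} : Set (Fin 4 ⊕ (R ⊕ S × Fin 2))).ncard = 2 :=
    ncard_pair (by simp)
  have := ncard_add_ncard_compl T
  have := ncard_add_ncard_compl ({.inl 0, .inl 3} : Set (Fin 4 ⊕ (R ⊕ S × Fin 2)))
  omega

end Caterpillar

section G3

open SimpleGraph

variable {r s p q : ℕ}

lemma nonempty_G3_iso_attachPendants (r s p q : ℕ) :
    Nonempty (G3 r s p q ≃g attachPendants (pathGraph 4)
      (Sum.elim (fun _ : Fin r ↦ 0) (fun _ : Fin p ↦ 3))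
      (Sum.elim (fun _ : Fin s ↦ 0) (fun _ : Fin q ↦ 3))) := by
  let e : Fin 4 ⊕ ((Fin r ⊕ Fin s × Fin 2) ⊕ (Fin p ⊕ Fin q × Fin 2)) ≃
      Fin 4 ⊕ ((Fin r ⊕ Fin p) ⊕ (Fin s ⊕ Fin q) × Fin 2) :=
    .sumCongr (.refl _) ((Equiv.sumSumSumComm _ _ _ _).trans
      (.sumCongr (.refl _) (Equiv.sumProdDistrib _ _ _).symm))
  have hbase : ∀ i j : Fin 4, (i : ℕ) + 1 = j ∨ (j : ℕ) + 1 = i ↔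
      ¬ i = j ∧ ((∃ k : Fin 3, i = k.castSucc ∧ j = k.succ) ∨
        ∃ k : Fin 3, j = k.castSucc ∧ i = k.succ) := by decide
  have hpath {m : ℕ} (a b : Fin m) : ∀ k l : Fin 2, a = b ∧ ¬ k = l ↔
      (a = b → ¬ k = l) ∧ (k = 0 ∧ b = a ∧ l = 1 ∨ l = 0 ∧ a = b ∧ k = 1) := by
    grind
  refine ⟨⟨e, ?_⟩⟩
  rintro (i | (a | ⟨a, k⟩) | (a | ⟨a, k⟩)) (j | (b | ⟨b, l⟩) | (b | ⟨b, l⟩))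
  case inl.inl => simpa [e, G3, pathGraph_adj] using hbase i j
  case inr.inl.inr.inr.inl.inr => simpa [e, G3] using hpath a b k l
  case inr.inr.inr.inr.inr.inr => simpa [e, G3] using hpath a b k l
  all_goals simp [e, G3]

lemma connected_G3 (r s p q : ℕ) : (G3 r s p q).Connected := by
  obtain ⟨e⟩ := nonempty_G3_iso_attachPendants r s p q
  exact e.connected_iff.mpr (attachPendants.connected (pathGraph_connected 3))

lemma dissNum_G3 (hs : 2 ≤ s) (hq : 1 ≤ q) : dissNum (G3 r s p q) = r + p + 2 * s + 2 * q + 2 := by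
  obtain ⟨e⟩ := nonempty_G3_iso_attachPendants r s p q
  rw [dissNum_congr e, dissNum_attachPendants_pathGraph_four
    (s := .inl ⟨0, by omega⟩) (s' := .inl ⟨1, by omega⟩) (s'' := .inr ⟨0, hq⟩)]
  · simp only [Nat.card_eq_fintype_card, Fintype.card_sum, Fintype.card_fin, Fintype.card_prod]
    omega
  all_goals simp

lemma ncard_preimage_sumElim_const_left {ι : Type*} {x y : ι} (hxy : x ≠ y) (m n : ℕ) :
    (Sum.elim (fun _ : Fin m ↦ x) (fun _ : Fin n ↦ y) ⁻¹' {x}).ncard = m := by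
  have : Sum.elim (fun _ : Fin m ↦ x) (fun _ : Fin n ↦ y) ⁻¹' {x} = range Sum.inl := by
    ext (i | i) <;> simp [hxy.symm]
  rw [this, ← image_univ, ncard_image_of_injective _ Sum.inl_injective, ncard_univ, Nat.card_fin]

lemma ncard_preimage_sumElim_const_right {ι : Type*} {x y : ι} (hxy : x ≠ y) (m n : ℕ) :
    (Sum.elim (fun _ : Fin m ↦ x) (fun _ : Fin n ↦ y) ⁻¹' {y}).ncard = n := by
  have : Sum.elim (fun _ : Fin m ↦ x) (fun _ : Fin n ↦ y) ⁻¹' {y} = range Sum.inr := by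
    ext (i | i) <;> simp [hxy]
  rw [this, ← image_univ, ncard_image_of_injective _ Sum.inr_injective, ncard_univ, Nat.card_fin]

lemma ncard_fiber_eq_sumElim_const {ι R : Type*} {x y : ι} (hxy : x ≠ y) {α : R → ι}
    (hα : ∀ r, α r = x ∨ α r = y) (i : ι) :
    (α ⁻¹' {i}).ncard = (Sum.elim (fun _ : Fin (α ⁻¹' {x}).ncard ↦ x)
      (fun _ : Fin (α ⁻¹' {y}).ncard ↦ y) ⁻¹' {i}).ncard := by
  by_cases hx : i = x
  · rw [hx, ncard_preimage_sumElim_const_left hxy]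
  by_cases hy : i = y
  · rw [hy, ncard_preimage_sumElim_const_right hxy]
  · have h₁ : α ⁻¹' {i} = ∅ := by grind
    have h₂ : Sum.elim (fun _ : Fin (α ⁻¹' {x}).ncard ↦ x)
        (fun _ : Fin (α ⁻¹' {y}).ncard ↦ y) ⁻¹' {i} = ∅ := by grind
    rw [h₁, h₂, ncard_empty, ncard_empty]

lemma nonempty_attachPendants_iso_G3 {R S : Type} [Finite R] [Finite S] {α : R → Fin 4}
    {β : S → Fin 4} (hα : ∀ r, α r = 0 ∨ α r = 3) (hβ : ∀ s, β s = 0 ∨ β s = 3) :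
    Nonempty (attachPendants (pathGraph 4) α β ≃g
      G3 (α ⁻¹' {0}).ncard (β ⁻¹' {0}).ncard (α ⁻¹' {3}).ncard (β ⁻¹' {3}).ncard) := by
  obtain ⟨e⟩ := attachPendants.nonempty_iso_of_ncard_fiber_eq (L := pathGraph 4)
    (ncard_fiber_eq_sumElim_const (by decide) hα) (ncard_fiber_eq_sumElim_const (by decide) hβ)
  obtain ⟨e'⟩ := nonempty_G3_iso_attachPendants (α ⁻¹' {0}).ncard (β ⁻¹' {0}).ncard
    (α ⁻¹' {3}).ncard (β ⁻¹' {3}).ncard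
  exact ⟨e.trans e'.symm⟩

lemma nonempty_G3_iso_G3_swap (r s p q : ℕ) : Nonempty (G3 r s p q ≃g G3 p q r s) := by
  obtain ⟨e⟩ := nonempty_G3_iso_attachPendants r s p q
  obtain ⟨e'⟩ := nonempty_G3_iso_attachPendants p q r s
  let reversal : pathGraph 4 ≃g pathGraph 4 := ⟨Fin.revPerm, by
    simp only [pathGraph_adj, Fin.revPerm_apply, Fin.val_rev]
    omega⟩
  refine ⟨e.trans (.trans (attachPendants.congr reversal (.sumComm _ _) (.sumComm _ _) ?_ ?_)
    e'.symm)⟩ <;> rintro (_ | _) <;> rfl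

end G3

/-! ### Links between the two hubs -/

section Link

variable {ι R S : Type} {t : ℝ}

/-- `L` is a link between the hubs `x` and `y`: positive values `a` and `b` at the hubs extend to a
positive function on `L` that satisfies the eigenvalue equation for `t` away from the hubs, and the
neighbour sums of the extension at the hubs are the entries of
`t / (t ^ 2 - 1) • !![c, m; m, c] *ᵥ ![a, b]`. Thus, up to the factor `t / (t ^ 2 - 1)`, the
constants `c` and `m` are those of the Schur complement that eliminates the inner vertices. -/
structure IsLink [Fintype ι] (L : SimpleGraph ι) (x y : ι) (t c m : ℝ) : Prop where
  ne : x ≠ y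
  exists_extension (a b : ℝ) : 0 < a → 0 < b → ∃ z : ι → ℝ, (∀ i, 0 < z i) ∧ z x = a ∧ z y = b ∧
    (∀ i, i ≠ x → i ≠ y → (adjMat L *ᵥ z) i = t * z i) ∧
    (adjMat L *ᵥ z) x = t / (t ^ 2 - 1) * (c * a + m * b) ∧
    (adjMat L *ᵥ z) y = t / (t ^ 2 - 1) * (c * b + m * a)

/-- The extension of `z` to the attached pendant vertices and paths of `attachPendants L α β` that
satisfies the eigenvalue equation for `t` there. -/
noncomputable def pendantExtension (t : ℝ) (α : R → ι) (β : S → ι) (z : ι → ℝ) :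
    ι ⊕ (R ⊕ S × Fin 2) → ℝ
  | .inl i => z i
  | .inr (.inl r) => z (α r) / t
  | .inr (.inr (s, 0)) => t / (t ^ 2 - 1) * z (β s)
  | .inr (.inr (s, 1)) => z (β s) / (t ^ 2 - 1)

variable {L : SimpleGraph ι} {α : R → ι} {β : S → ι} {z : ι → ℝ}

lemma pendantExtension_pos (ht : 1 < t) (hz : ∀ i, 0 < z i) (v : ι ⊕ (R ⊕ S × Fin 2)) :
    0 < pendantExtension t α β z v := by
  have ht₀ : 0 < t := by linarith
  have hD : 0 < t ^ 2 - 1 := by nlinarith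
  rcases v with i | r | ⟨s, k⟩
  · exact hz i
  · exact div_pos (hz _) ht₀
  · match k with
    | 0 => exact mul_pos (div_pos ht₀ hD) (hz _)
    | 1 => exact div_pos (hz _) hD

open scoped Classical in
lemma sum_ite_eq_comp {κ : Type*} [Fintype κ] (γ : κ → ι) (w : ι → ℝ) (i : ι) :
    ∑ k, (if i = γ k then w (γ k) else 0) = (γ ⁻¹' {i}).ncard * w i := by
  calc ∑ k, (if i = γ k then w (γ k) else 0) = ∑ k, (if γ k = i then w i else 0) :=
        Finset.sum_congr rfl fun k _ ↦ by grind
    _ = (γ ⁻¹' {i}).ncard * w i := by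
        rw [← Finset.sum_filter, Finset.sum_const, nsmul_eq_mul, ← ncard_coe_finset]
        simp [preimage]

variable [Fintype ι] [Fintype R] [Fintype S]

lemma adjMat_mulVec_pendantExtension_inr (ht : 1 < t) (x : R ⊕ S × Fin 2) :
    (adjMat (attachPendants L α β) *ᵥ pendantExtension t α β z) (.inr x) =
      t * pendantExtension t α β z (.inr x) := by
  have ht₀ : t ≠ 0 := by positivity
  have hD : t ^ 2 - 1 ≠ 0 := by nlinarith
  classical
  rcases x with r | ⟨s, k⟩
  · simp [adjMat_mulVec_apply, pendantExtension, mul_div_cancel₀ _ ht₀]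
  · match k with
    | 0 => calc
      _ = z (β s) + z (β s) / (t ^ 2 - 1) := by
        simp [adjMat_mulVec_apply, pendantExtension, Fintype.sum_prod_type, ite_and]
      _ = t * (t / (t ^ 2 - 1) * z (β s)) := by field_simp; ring
    | 1 => calc
      _ = t / (t ^ 2 - 1) * z (β s) := by
        simp [adjMat_mulVec_apply, pendantExtension, Fintype.sum_prod_type, ite_and]
      _ = t * (z (β s) / (t ^ 2 - 1)) := by ring

lemma adjMat_mulVec_pendantExtension_inl (ht : 1 < t) (i : ι) :
    (adjMat (attachPendants L α β) *ᵥ pendantExtension t α β z) (.inl i) =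
      (adjMat L *ᵥ z) i + t / (t ^ 2 - 1) * (((β ⁻¹' {i}).ncard +
        (α ⁻¹' {i}).ncard * (1 - 1 / t ^ 2)) * z i) := by
  have ht₀ : t ≠ 0 := by positivity
  have hD : t ^ 2 - 1 ≠ 0 := by nlinarith
  have hleaf := sum_ite_eq_comp α (fun j ↦ z j / t) i
  have hpath := sum_ite_eq_comp β (fun j ↦ t / (t ^ 2 - 1) * z j) i
  classical
  calc (adjMat (attachPendants L α β) *ᵥ pendantExtension t α β z) (.inl i)
      = (adjMat L *ᵥ z) i + ((∑ r, if i = α r then z (α r) / t else 0) +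
          ∑ s, if i = β s then t / (t ^ 2 - 1) * z (β s) else 0) := by
        simp [adjMat_mulVec_apply, pendantExtension, Fintype.sum_prod_type, ite_and]
    _ = _ := by
        rw [hleaf, hpath]
        field_simp
        ring

/-- The slack of a hub carrying `κ` pendant paths and `ρ` pendant vertices, at an end of a link with
Schur complement constant `c`: a pendant path weighs `1`, a pendant vertex weighs `1 - 1 / t ^ 2`,
and `t ^ 2 - 1 - c` is the weight at which the hub satisfies the eigenvalue equation for `t` when
the other hub has value `0`. -/
noncomputable def slack (t c : ℝ) (κ ρ : ℕ) : ℝ :=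
  t ^ 2 - 1 - c - κ - ρ * (1 - 1 / t ^ 2)

variable {x y : ι} {c m : ℝ}

lemma IsLink.exists_attachPendants_extension (hL : IsLink L x y t c m) (ht : 1 < t)
    (hα : ∀ r, α r = x ∨ α r = y) (hβ : ∀ s, β s = x ∨ β s = y) {a b : ℝ} (ha : 0 < a)
    (hb : 0 < b) : ∃ Z : ι ⊕ (R ⊕ S × Fin 2) → ℝ, (∀ v, 0 < Z v) ∧
      Z (.inl x) = a ∧ Z (.inl y) = b ∧
      (∀ v, v ≠ .inl x → v ≠ .inl y → (adjMat (attachPendants L α β) *ᵥ Z) v = t * Z v) ∧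
      (adjMat (attachPendants L α β) *ᵥ Z) (.inl x) =
        t * a - t / (t ^ 2 - 1) * (slack t c (β ⁻¹' {x}).ncard (α ⁻¹' {x}).ncard * a - m * b) ∧
      (adjMat (attachPendants L α β) *ᵥ Z) (.inl y) =
        t * b - t / (t ^ 2 - 1) * (slack t c (β ⁻¹' {y}).ncard (α ⁻¹' {y}).ncard * b - m * a) := by
  have hD : t ^ 2 - 1 ≠ 0 := by nlinarith
  obtain ⟨z, hz, rfl, rfl, hin, hx, hy⟩ := hL.exists_extension a b ha hb
  refine ⟨pendantExtension t α β z, pendantExtension_pos ht hz, rfl, rfl,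
    fun v hvx hvy ↦ ?_, ?_, ?_⟩
  · rcases v with i | v
    · have hix : i ≠ x := fun h ↦ hvx (h ▸ rfl)
      have hiy : i ≠ y := fun h ↦ hvy (h ▸ rfl)
      have hR : α ⁻¹' {i} = ∅ := by grind
      have hS : β ⁻¹' {i} = ∅ := by grind
      rw [adjMat_mulVec_pendantExtension_inl ht, hin i hix hiy, hR, hS]
      simp [pendantExtension]
    · exact adjMat_mulVec_pendantExtension_inr ht v
  · rw [adjMat_mulVec_pendantExtension_inl ht, hx, slack]
    field_simp
    ring
  · rw [adjMat_mulVec_pendantExtension_inl ht, hy, slack]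
    field_simp
    ring

lemma IsLink.two_mul_mul_le_slack_form (hL : IsLink L x y t c m) (ht : 1 < t)
    (hα : ∀ r, α r = x ∨ α r = y) (hβ : ∀ s, β s = x ∨ β s = y)
    {G : SimpleGraph (ι ⊕ (R ⊕ S × Fin 2))} (hle : attachPendants L α β ≤ G) (hG : specRad G ≤ t)
    {a b : ℝ} (ha : 0 < a) (hb : 0 < b) :
    2 * m * (a * b) ≤ slack t c (β ⁻¹' {x}).ncard (α ⁻¹' {x}).ncard * a ^ 2 +
      slack t c (β ⁻¹' {y}).ncard (α ⁻¹' {y}).ncard * b ^ 2 := by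
  obtain ⟨Z, hZ, hZx, hZy, hin, hx, hy⟩ := hL.exists_attachPendants_extension ht hα hβ ha hb
  have hpos : 0 < t / (t ^ 2 - 1) := div_pos (by linarith) (by nlinarith)
  have hrayleigh : Z ⬝ᵥ adjMat (attachPendants L α β) *ᵥ Z ≤ t * (Z ⬝ᵥ Z) :=
    (dotProduct_mulVec_le_of_le hle fun v ↦ (hZ v).le).trans
      (mul_le_mul_of_nonneg_right hG (dotProduct_nonneg_of_nonneg (fun v ↦ (hZ v).le)
        fun v ↦ (hZ v).le))
  have hresidual : Z ⬝ᵥ adjMat (attachPendants L α β) *ᵥ Z - t * (Z ⬝ᵥ Z) =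
      -(t / (t ^ 2 - 1)) *
        (slack t c (β ⁻¹' {x}).ncard (α ⁻¹' {x}).ncard * a ^ 2 +
          slack t c (β ⁻¹' {y}).ncard (α ⁻¹' {y}).ncard * b ^ 2 - 2 * m * (a * b)) := calc
    _ = ∑ v, Z v * ((adjMat (attachPendants L α β) *ᵥ Z) v - t * Z v) := by
      simp only [dotProduct, Finset.mul_sum, ← Finset.sum_sub_distrib]
      exact Finset.sum_congr rfl fun v _ ↦ by ring
    _ = _ := by
      rw [Fintype.sum_eq_add (.inl x) (.inl y) (by simpa using hL.ne) fun v ⟨hvx, hvy⟩ ↦ by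
        rw [hin v hvx hvy, sub_self, mul_zero], hx, hy, hZx, hZy]
      ring
  nlinarith

lemma IsLink.exists_eigenvector (hL : IsLink L x y t c m) (ht : 1 < t)
    (hα : ∀ r, α r = x ∨ α r = y) (hβ : ∀ s, β s = x ∨ β s = y) (hm : 0 < m)
    (hx : 0 < slack t c (β ⁻¹' {x}).ncard (α ⁻¹' {x}).ncard)
    (h : slack t c (β ⁻¹' {x}).ncard (α ⁻¹' {x}).ncard *
      slack t c (β ⁻¹' {y}).ncard (α ⁻¹' {y}).ncard = m ^ 2) :
    ∃ Z : ι ⊕ (R ⊕ S × Fin 2) → ℝ, (∀ v, 0 < Z v) ∧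
      adjMat (attachPendants L α β) *ᵥ Z = t • Z := by
  obtain ⟨Z, hZ, hZx, hZy, hin, hx, hy⟩ := hL.exists_attachPendants_extension ht hα hβ hm hx
  refine ⟨Z, hZ, funext fun v ↦ ?_⟩
  by_cases hvx : v = .inl x
  · simp [hvx, hx, hZx, mul_comm m]
  by_cases hvy : v = .inl y
  · rw [hvy, hy, mul_comm (slack t c (β ⁻¹' {y}).ncard (α ⁻¹' {y}).ncard), h]
    simp [hZy, pow_two]
  · exact hin v hvx hvy

/- If `f ≤ 0`, then `b = m` and `a` large contradict `h`; if `f > 0`, the right side minus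
the left side is minimal over `a` at `a = m * b / f`, that is, on the ray of `(m, f)`. -/
lemma sq_le_mul_of_forall_pos {f g m : ℝ} (hm : 0 < m)
    (h : ∀ a b : ℝ, 0 < a → 0 < b → 2 * m * (a * b) ≤ f * a ^ 2 + g * b ^ 2) : m ^ 2 ≤ f * g := by
  rcases le_or_gt f 0 with hf | hf
  · have hlarge := h (|g| + 1) m (by positivity) hm
    have hneg : f * (|g| + 1) ^ 2 ≤ 0 := mul_nonpos_of_nonpos_of_nonneg hf (sq_nonneg _)
    have : g * m ^ 2 ≤ |g| * m ^ 2 := by gcongr; exact le_abs_self g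
    nlinarith [abs_nonneg g, pow_pos hm 2, mul_nonneg (abs_nonneg g) (sq_nonneg m)]
  · have := h m f hm hf
    refine le_of_mul_le_mul_left ?_ hf
    linarith

lemma IsLink.two_mul_le_slack_add_slack (hL : IsLink L x y t c m) (ht : 1 < t)
    (hα : ∀ r, α r = x ∨ α r = y) (hβ : ∀ s, β s = x ∨ β s = y)
    {G : SimpleGraph (ι ⊕ (R ⊕ S × Fin 2))} (hle : attachPendants L α β ≤ G)
    (hG : specRad G ≤ t) :
    2 * m ≤ slack t c (β ⁻¹' {x}).ncard (α ⁻¹' {x}).ncard +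
      slack t c (β ⁻¹' {y}).ncard (α ⁻¹' {y}).ncard := by
  simpa using hL.two_mul_mul_le_slack_form ht hα hβ hle hG one_pos one_pos

lemma IsLink.sq_le_slack_mul_slack (hL : IsLink L x y t c m) (ht : 1 < t)
    (hα : ∀ r, α r = x ∨ α r = y) (hβ : ∀ s, β s = x ∨ β s = y)
    {G : SimpleGraph (ι ⊕ (R ⊕ S × Fin 2))} (hle : attachPendants L α β ≤ G)
    (hG : specRad G ≤ t) (hm : 0 < m) :
    m ^ 2 ≤ slack t c (β ⁻¹' {x}).ncard (α ⁻¹' {x}).ncard *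
      slack t c (β ⁻¹' {y}).ncard (α ⁻¹' {y}).ncard :=
  sq_le_mul_of_forall_pos hm fun _ _ ↦ hL.two_mul_mul_le_slack_form ht hα hβ hle hG

end Link

section Links

open SimpleGraph

variable {t : ℝ}

lemma isLink_pathGraph_two (ht : 1 < t) : IsLink (pathGraph 2) 0 1 t 0 (t - 1 / t) := by
  have hD : t ^ 2 - 1 ≠ 0 := by nlinarith
  have hunit : t / (t ^ 2 - 1) * (t - t⁻¹) = 1 := by field_simp
  refine ⟨by simp, fun a b ha hb ↦ ⟨![a, b], ?_, rfl, rfl, ?_, ?_, ?_⟩⟩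
  · simp [Fin.forall_fin_succ, ha, hb]
  · simp [Fin.forall_fin_succ]
  all_goals simp [adjMat_mulVec_apply, Fin.sum_univ_two, pathGraph_adj, ← mul_assoc, hunit]

lemma isLink_pathGraph_three (ht : 1 < t) :
    IsLink (pathGraph 3) 0 2 t (1 - 1 / t ^ 2) (1 - 1 / t ^ 2) := by
  have hD : t ^ 2 - 1 ≠ 0 := by nlinarith
  refine ⟨by simp, fun a b ha hb ↦ ?_⟩
  obtain ⟨w, hw⟩ : ∃ w, w = (a + b) / t := ⟨_, rfl⟩
  have hw₀ : 0 < w := by rw [hw]; positivity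
  have hmid : a + b = t * w := by rw [hw]; field_simp
  have hhub : w = t / (t ^ 2 - 1) * ((1 - 1 / t ^ 2) * a + (1 - 1 / t ^ 2) * b) := by
    rw [hw]; field_simp
  refine ⟨![a, w, b], by simp [Fin.forall_fin_succ, ha, hb, hw₀], rfl, rfl, ?_, ?_, ?_⟩
  · simpa [Fin.forall_fin_succ, adjMat_mulVec_apply, Fin.sum_univ_three, pathGraph_adj] using hmid
  · simpa [adjMat_mulVec_apply, Fin.sum_univ_three, pathGraph_adj] using hhub
  · simpa [adjMat_mulVec_apply, Fin.sum_univ_three, pathGraph_adj, add_comm] using hhub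

lemma isLink_pathGraph_four (ht : 1 < t) : IsLink (pathGraph 4) 0 3 t 1 (1 / t) := by
  have hD : 0 < t ^ 2 - 1 := by nlinarith
  refine ⟨by simp, fun a b ha hb ↦ ?_⟩
  obtain ⟨w, hw⟩ : ∃ w, w = (t * a + b) / (t ^ 2 - 1) := ⟨_, rfl⟩
  obtain ⟨w', hw'⟩ : ∃ w', w' = (a + t * b) / (t ^ 2 - 1) := ⟨_, rfl⟩
  have hw₀ : 0 < w := by rw [hw]; positivity
  have hw₀' : 0 < w' := by rw [hw']; positivity
  have hmid : a + w' = t * w := by rw [hw, hw']; field_simp; ring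
  have hmid' : w + b = t * w' := by rw [hw, hw']; field_simp; ring
  have hhub : w = t / (t ^ 2 - 1) * (1 * a + 1 / t * b) := by rw [hw]; field_simp
  have hhub' : w' = t / (t ^ 2 - 1) * (1 * b + 1 / t * a) := by rw [hw']; field_simp; ring
  refine ⟨![a, w, w', b], by simp [Fin.forall_fin_succ, ha, hb, hw₀, hw₀'], rfl, rfl, ?_, ?_, ?_⟩
  · simp [Fin.forall_fin_succ, adjMat_mulVec_apply, Fin.sum_univ_four, pathGraph_adj, hmid, hmid']
  · simpa [adjMat_mulVec_apply, Fin.sum_univ_four, pathGraph_adj] using hhub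
  · simpa [adjMat_mulVec_apply, Fin.sum_univ_four, pathGraph_adj] using hhub'

lemma isLink_starGraph (ht : 1 < t) : IsLink (starGraph (0 : Fin 4)) 1 2 t 1 1 := by
  have hD : 0 < t ^ 2 - 1 := by nlinarith
  refine ⟨by simp, fun a b ha hb ↦ ?_⟩
  obtain ⟨w, hw⟩ : ∃ w, w = t * (a + b) / (t ^ 2 - 1) := ⟨_, rfl⟩
  obtain ⟨w', hw'⟩ : ∃ w', w' = (a + b) / (t ^ 2 - 1) := ⟨_, rfl⟩
  have hw₀ : 0 < w := by rw [hw]; positivity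
  have hw₀' : 0 < w' := by rw [hw']; positivity
  have hcenter : a + b + w' = t * w := by rw [hw, hw']; field_simp; ring
  have hleaf : w = t * w' := by rw [hw, hw']; field_simp
  have hhub : w = t / (t ^ 2 - 1) * (1 * a + 1 * b) := by rw [hw]; field_simp
  refine ⟨![w, a, b, w'], by simp [Fin.forall_fin_succ, ha, hb, hw₀, hw₀'], rfl, rfl, ?_, ?_, ?_⟩
  · simp [Fin.forall_fin_succ, adjMat_mulVec_apply, Fin.sum_univ_four, hcenter, hleaf]
  · simpa [adjMat_mulVec_apply, Fin.sum_univ_four] using hhub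
  · simpa [adjMat_mulVec_apply, Fin.sum_univ_four, add_comm] using hhub

end Links

/-! ### The slacks of the extremal tree -/

section Slack

lemma slack_one (c : ℝ) (κ ρ : ℕ) : slack 1 c κ ρ = -c - κ := by
  simp [slack]

lemma one_le_slack {κ ρ : ℕ} {t : ℝ} (ht : κ + ρ + 3 ≤ t) : 1 ≤ slack t 1 κ ρ := by
  have hκ : (0 : ℝ) ≤ κ := κ.cast_nonneg
  have hρ : (0 : ℝ) ≤ ρ := ρ.cast_nonneg
  have ht₀ : 0 ≤ 1 / t ^ 2 := by positivity
  rw [slack]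
  nlinarith [hκ, hρ]

lemma continuousOn_slack (c : ℝ) (κ ρ : ℕ) :
    ContinuousOn (fun t ↦ slack t c κ ρ) (Ioi 0) := by
  unfold slack
  fun_prop (disch := simp +contextual [ne_of_gt])

lemma exists_slack_mul_slack_eq (κ₁ ρ₁ κ₂ ρ₂ : ℕ) :
    ∃ t : ℝ, 1 < t ∧ 0 < slack t 1 κ₁ ρ₁ ∧ 0 < slack t 1 κ₂ ρ₂ ∧
      slack t 1 κ₁ ρ₁ * slack t 1 κ₂ ρ₂ = (1 / t) ^ 2 := by
  have hpos₁ : (0 : ℝ) ≤ κ₁ + ρ₁ := by positivity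
  have hpos₂ : (0 : ℝ) ≤ κ₂ + ρ₂ := by positivity
  obtain ⟨T, hT⟩ : ∃ T : ℝ, T = κ₁ + ρ₁ + (κ₂ + ρ₂) + 3 := ⟨_, rfl⟩
  let f (t : ℝ) : ℝ := max (slack t 1 κ₁ ρ₁) 0 * max (slack t 1 κ₂ ρ₂) 0 * t ^ 2
  have hslack_one (κ ρ : ℕ) : slack 1 1 κ ρ ≤ 0 := by
    linarith [slack_one 1 κ ρ, (κ.cast_nonneg : (0 : ℝ) ≤ κ)]
  have hf₁ : f 1 ≤ 1 := by simp [f, hslack_one]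
  have hfT : 1 ≤ f T := one_le_mul_of_one_le_of_one_le
    (one_le_mul_of_one_le_of_one_le (le_max_of_le_left (one_le_slack (by linarith [hpos₂])))
      (le_max_of_le_left (one_le_slack (by linarith [hpos₁]))))
    (one_le_pow₀ (by linarith))
  have hf : ContinuousOn f (Icc 1 T) := by
    have hsub : Icc 1 T ⊆ Ioi 0 := fun t ht ↦ one_pos.trans_le ht.1
    have h₁ := (continuousOn_slack 1 κ₁ ρ₁).mono hsub
    have h₂ := (continuousOn_slack 1 κ₂ ρ₂).mono hsub
    fun_prop
  obtain ⟨t, ht, hft⟩ := intermediate_value_Icc (by linarith) hf ⟨hf₁, hfT⟩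
  have ht₀ : 0 < t := one_pos.trans_le ht.1
  have h₁ : 0 < slack t 1 κ₁ ρ₁ := by
    by_contra! h
    simp [f, max_eq_right h] at hft
  have h₂ : 0 < slack t 1 κ₂ ρ₂ := by
    by_contra! h
    simp [f, max_eq_right h] at hft
  refine ⟨t, ht.1.lt_of_ne ?_, h₁, h₂, ?_⟩
  · rintro rfl
    exact h₁.not_ge (hslack_one κ₁ ρ₁)
  · simp only [f, max_eq_left h₁.le, max_eq_left h₂.le] at hft
    rw [one_div, inv_pow]
    exact eq_inv_of_mul_eq_one_left hft

lemma two_lt_of_slack_pos {t : ℝ} (ht : 1 < t) {κ ρ : ℕ} (hκ : 2 ≤ κ) (h : 0 < slack t 1 κ ρ) :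
    2 < t := by
  have hκ' : (2 : ℝ) ≤ κ := by exact_mod_cast hκ
  have hρ : 0 ≤ ρ * (1 - 1 / t ^ 2) :=
    mul_nonneg ρ.cast_nonneg (sub_nonneg.mpr (by rw [div_le_one (by positivity)]; nlinarith))
  rw [slack] at h
  nlinarith

end Slack

section Balance

variable {t : ℝ} {s q p κ₁ κ₂ ρ₁ ρ₂ : ℕ}

/-- The tree `G3 0 s p q` with `p ≤ 1` has its pendant paths shared evenly by the two hubs, and `t`
is its spectral radius, characterized by the slacks at the hubs. -/
structure IsBalanced (t : ℝ) (s q p : ℕ) : Prop where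
  two_lt : 2 < t
  le : q ≤ s
  le_add_one : s ≤ q + 1
  le_one : p ≤ 1
  slack_pos_left : 0 < slack t 1 s 0
  slack_pos_right : 0 < slack t 1 q p
  slack_mul_slack : slack t 1 s 0 * slack t 1 q p = (1 / t) ^ 2

lemma IsBalanced.one_lt (hb : IsBalanced t s q p) : 1 < t := by
  linarith [hb.two_lt]

lemma exists_isBalanced (hs : 2 ≤ s) (hqs : q ≤ s) (hsq : s ≤ q + 1) (hp : p ≤ 1) :
    ∃ t, IsBalanced t s q p := by
  obtain ⟨t, ht, hs₀, hq₀, hF⟩ := exists_slack_mul_slack_eq s 0 q p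
  exact ⟨t, two_lt_of_slack_pos ht hs hs₀, hqs, hsq, hp, hs₀, hq₀, hF⟩

/- Trading a pendant path for two pendant vertices lowers the slack, as `1 < 2 * (1 - 1 / t ^ 2)`.
-/
lemma slack_add_slack_le_of_add_le (ht : 2 < t) (c : ℝ) {K P : ℕ} (hK : κ₁ + κ₂ ≤ K)
    (h : ρ₁ + ρ₂ + 2 * (κ₁ + κ₂) = P + 2 * K) :
    slack t c κ₁ ρ₁ + slack t c κ₂ ρ₂ ≤ 2 * (t ^ 2 - 1 - c) - K - P * (1 - 1 / t ^ 2) := by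
  have hu : 1 / t ^ 2 ≤ 1 / 4 := by gcongr; nlinarith
  have hK' : (κ₁ + κ₂ : ℝ) ≤ K := by exact_mod_cast hK
  have h' : (ρ₁ + ρ₂ + 2 * (κ₁ + κ₂) : ℝ) = P + 2 * K := by exact_mod_cast h
  simp only [slack]
  nlinarith [hu, hK']

lemma abs_slack_sub_slack_le (ht : 2 < t) (hqs : q ≤ s) (hsq : s ≤ q + 1) (hp : p ≤ 1) :
    |slack t 1 s 0 - slack t 1 q p| ≤ 1 - p * (1 / t ^ 2) := by
  have hu : 1 / t ^ 2 ≤ 1 / 4 := by gcongr; nlinarith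
  have hu₀ : 0 < 1 / t ^ 2 := by positivity
  rw [abs_le]
  obtain rfl | rfl : s = q ∨ s = q + 1 := by omega
  all_goals
    obtain rfl | rfl : p = 0 ∨ p = 1 := by omega
    all_goals
      simp only [slack]
      push_cast
      constructor <;> linarith [hu, hu₀]

lemma IsBalanced.sq_slack_add_slack_le (hb : IsBalanced t s q p) :
    (slack t 1 s 0 + slack t 1 q p) ^ 2 ≤ (1 - p * (1 / t ^ 2)) ^ 2 + 4 * (1 / t) ^ 2 := by
  have h := pow_le_pow_left₀ (abs_nonneg _) (abs_slack_sub_slack_le hb.two_lt hb.le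
    hb.le_add_one hb.le_one) 2
  rw [sq_abs] at h
  linarith [hb.slack_mul_slack]

lemma IsBalanced.slack_add_slack_lt (hb : IsBalanced t s q p) :
    slack t 1 s 0 + slack t 1 q p < 3 / 2 - p * (1 / t ^ 2) := by
  have ht := hb.two_lt
  have hp := hb.le_one
  have hu : 1 / t ^ 2 < 1 / 4 := by gcongr; nlinarith
  have hsum := hb.sq_slack_add_slack_le
  rw [_root_.one_div_pow] at hsum
  obtain rfl | rfl : p = 0 ∨ p = 1 := by omega
  · refine lt_of_pow_lt_pow_left₀ 2 (by norm_num) (hsum.trans_lt ?_)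
    push_cast
    linarith
  · refine lt_of_pow_lt_pow_left₀ 2 (by push_cast; linarith) (hsum.trans_lt ?_)
    push_cast
    linarith

lemma IsBalanced.slack_add_slack_lt_pathGraph_two (hb : IsBalanced t s q p)
    (h : ρ₁ + ρ₂ + 2 * (κ₁ + κ₂) = p + 2 * (s + q) + 2) :
    slack t 0 κ₁ ρ₁ + slack t 0 κ₂ ρ₂ < 2 * (t - 1 / t) := by
  have ht := hb.two_lt
  have hp := hb.le_one
  refine (slack_add_slack_le_of_add_le ht 0 (K := s + q + 1) (P := p) (by omega)
    (by omega)).trans_lt ?_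
  have hsum := hb.slack_add_slack_lt
  have hr : 1 / t < 1 / 2 := by gcongr
  have hu : 0 ≤ p * (1 / t ^ 2) := by positivity
  simp only [slack] at hsum
  push_cast at hsum ⊢
  linarith

lemma IsBalanced.slack_add_slack_lt_pathGraph_three (hb : IsBalanced t s q p)
    (h : ρ₁ + ρ₂ + 2 * (κ₁ + κ₂) = p + 2 * (s + q) + 1) :
    slack t (1 - 1 / t ^ 2) κ₁ ρ₁ + slack t (1 - 1 / t ^ 2) κ₂ ρ₂ < 2 * (1 - 1 / t ^ 2) := by
  have ht := hb.two_lt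
  have hp := hb.le_one
  refine (slack_add_slack_le_of_add_le ht (1 - 1 / t ^ 2) (K := s + q + p) (P := 1 - p) (by omega)
    (by omega)).trans_lt ?_
  have hsum := hb.slack_add_slack_lt
  have hu : 1 / t ^ 2 ≤ 1 / 4 := by gcongr; nlinarith
  simp only [slack] at hsum
  obtain rfl | rfl : p = 0 ∨ p = 1 := by omega
  · push_cast at hsum ⊢
    linarith
  · push_cast at hsum ⊢
    linarith

lemma IsBalanced.slack_add_slack_lt_starGraph (hb : IsBalanced t s q p)
    (h : ρ₁ + ρ₂ + 2 * (κ₁ + κ₂) = p + 2 * (s + q)) :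
    slack t 1 κ₁ ρ₁ + slack t 1 κ₂ ρ₂ < 2 * 1 := by
  have ht := hb.two_lt
  have hp := hb.le_one
  refine (slack_add_slack_le_of_add_le ht 1 (K := s + q) (P := p) (by omega) h).trans_lt ?_
  have hsum := hb.slack_add_slack_lt
  have hu : 0 ≤ p * (1 / t ^ 2) := by positivity
  simp only [slack] at hsum
  push_cast at hsum ⊢
  linarith

lemma IsBalanced.slack_add_slack_lt_pathGraph_four (hb : IsBalanced t s q p)
    (h : ρ₁ + ρ₂ + 2 * (κ₁ + κ₂) = p + 2 * (s + q)) (hκ : κ₁ + κ₂ < s + q) :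
    slack t 1 κ₁ ρ₁ + slack t 1 κ₂ ρ₂ < 2 * (1 / t) := by
  have ht := hb.two_lt
  have hp := hb.le_one
  refine (slack_add_slack_le_of_add_le ht 1 (K := s + q - 1) (P := p + 2) (by omega)
    (by omega)).trans_lt ?_
  have hr : 1 / t < 1 / 2 := by gcongr
  have hr₀ : 0 < 1 / t := by positivity
  have hu : 1 / t ^ 2 ≤ 1 := by rw [div_le_one (by positivity)]; nlinarith
  have hgap : 1 + 4 * (1 / t) ^ 2 < (1 + 2 * (1 / t) - 2 * (1 / t) ^ 2) ^ 2 := by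
    nlinarith [mul_pos hr₀ (sub_pos.mpr hr), sq_nonneg (2 * (1 / t) - 2 * (1 / t) ^ 2)]
  have hdiff : (1 - p * (1 / t ^ 2)) ^ 2 ≤ 1 := by
    have hp' : (p : ℝ) ≤ 1 := by exact_mod_cast hp
    exact pow_le_one₀ (sub_nonneg.mpr (mul_le_one₀ hp' (by positivity) hu))
      (sub_le_self _ (by positivity))
  have hsum : slack t 1 s 0 + slack t 1 q p < 1 + 2 * (1 / t) - 2 * (1 / t) ^ 2 :=
    lt_of_pow_lt_pow_left₀ 2 (by nlinarith)
      (by linarith [hb.sq_slack_add_slack_le])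
  rw [_root_.one_div_pow] at hsum
  simp only [slack] at hsum
  push_cast [show 1 ≤ s + q by omega] at hsum ⊢
  linarith

lemma eq_of_abs_sub_add_le {δ : ℝ} (hδ : 1 / 2 < δ) (hδ₁ : δ < 1) (hqs : q ≤ s) (hsq : s ≤ q + 1)
    (hp : p ≤ 1) (hκ : κ₁ + κ₂ = s + q) (h : |(κ₂ - κ₁ + p * δ : ℝ)| ≤ |(q - s + p * δ : ℝ)|) :
    κ₁ = s ∧ κ₂ = q ∨ p = 0 ∧ κ₁ = q ∧ κ₂ = s := by
  have hbounds (c : ℝ) (hc : |(q - s + p * δ : ℝ)| = c) :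
      (κ₁ : ℝ) ≤ κ₂ + p * δ + c ∧ (κ₂ : ℝ) + p * δ ≤ κ₁ + c := by
    rw [hc, abs_le] at h
    constructor <;> linarith
  obtain rfl | rfl : p = 0 ∨ p = 1 := by omega
  · obtain ⟨h₁, h₂⟩ := hbounds (s - q) (by simp [abs_sub_comm, hqs])
    simp only [Nat.cast_zero, zero_mul, add_zero] at h₁ h₂
    have h₁' : κ₁ + q ≤ κ₂ + s := by exact_mod_cast (by linarith : (κ₁ + q : ℝ) ≤ κ₂ + s)
    have h₂' : κ₂ + q ≤ κ₁ + s := by exact_mod_cast (by linarith : (κ₂ + q : ℝ) ≤ κ₁ + s)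
    omega
  obtain rfl | rfl : s = q ∨ s = q + 1 := by omega
  · obtain ⟨h₁, h₂⟩ := hbounds δ (by simp [abs_of_pos (show 0 < δ by linarith)])
    simp only [Nat.cast_one, one_mul] at h₁ h₂
    have h₁' : κ₁ < κ₂ + 2 := by exact_mod_cast (by linarith : (κ₁ : ℝ) < κ₂ + 2)
    have h₂' : κ₂ ≤ κ₁ := by exact_mod_cast (by linarith : (κ₂ : ℝ) ≤ κ₁)
    omega
  · obtain ⟨h₁, h₂⟩ := hbounds (1 - δ) (by
      rw [abs_of_neg (by push_cast; linarith)]; push_cast; ring)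
    simp only [Nat.cast_one, one_mul] at h₁ h₂
    have h₁' : κ₁ ≤ κ₂ + 1 := by exact_mod_cast (by linarith : (κ₁ : ℝ) ≤ κ₂ + 1)
    have h₂' : κ₂ < κ₁ := by exact_mod_cast (by linarith : (κ₂ : ℝ) < κ₁)
    omega

lemma IsBalanced.eq_of_le_slack_mul_slack (hb : IsBalanced t s q p) (hκ : κ₁ + κ₂ = s + q)
    (hρ : ρ₁ + ρ₂ = p) (h : (1 / t) ^ 2 ≤ slack t 1 κ₁ ρ₁ * slack t 1 κ₂ ρ₂) :
    κ₁ = s ∧ ρ₁ = 0 ∧ κ₂ = q ∧ ρ₂ = p ∨ κ₁ = q ∧ ρ₁ = p ∧ κ₂ = s ∧ ρ₂ = 0 := by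
  have ht := hb.two_lt
  have hu : 1 / t ^ 2 < 1 / 4 := by gcongr; nlinarith
  have hu₀ : 0 < 1 / t ^ 2 := by positivity
  have hsum : slack t 1 κ₁ ρ₁ + slack t 1 κ₂ ρ₂ = slack t 1 s 0 + slack t 1 q p := by
    have hκ' : (κ₁ + κ₂ : ℝ) = s + q := by exact_mod_cast hκ
    have hρ' : (ρ₁ + ρ₂ : ℝ) = p := by exact_mod_cast hρ
    simp only [slack, ← hρ']
    push_cast
    linarith
  have hdiff : |slack t 1 κ₁ ρ₁ - slack t 1 κ₂ ρ₂| ≤ |slack t 1 s 0 - slack t 1 q p| := by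
    rw [← sq_le_sq]
    linear_combination 4 * h + 4 * hb.slack_mul_slack + congr_arg (· ^ 2) hsum
  obtain ⟨rfl, rfl⟩ | ⟨rfl, rfl⟩ : ρ₁ = 0 ∧ ρ₂ = p ∨ ρ₁ = p ∧ ρ₂ = 0 := by
    have := hb.le_one
    omega
  · have habs : |(κ₂ - κ₁ + ρ₂ * (1 - 1 / t ^ 2) : ℝ)| ≤ |(q - s + ρ₂ * (1 - 1 / t ^ 2) : ℝ)| := by
      convert hdiff using 2 <;> simp only [slack] <;> push_cast <;> ring
    have := eq_of_abs_sub_add_le (by linarith) (by linarith) hb.le hb.le_add_one hb.le_one hκ habs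
    omega
  · have habs : |(κ₁ - κ₂ + ρ₁ * (1 - 1 / t ^ 2) : ℝ)| ≤ |(q - s + ρ₁ * (1 - 1 / t ^ 2) : ℝ)| := by
      rw [abs_sub_comm] at hdiff
      convert hdiff using 2 <;> simp only [slack] <;> push_cast <;> ring
    have := eq_of_abs_sub_add_le (by linarith) (by linarith) hb.le hb.le_add_one hb.le_one
      (by omega : κ₂ + κ₁ = s + q) habs
    omega

end Balance

/-! ### Graphs with a pair of hubs -/

section HubPair

variable {V : Type} {G : SimpleGraph V} {u v : V} {σ : V → V}

/-- The vertices other than the hubs `u` and `v` form a dissociation set of `G`, in which `σ`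
exchanges the ends of each edge and fixes the isolated vertices. -/
structure IsHubPair (G : SimpleGraph V) (u v : V) (σ : V → V) : Prop where
  ne : u ≠ v
  involutive : σ.Involutive
  map_left : σ u = u
  map_right : σ v = v
  adj_iff {w z : V} : w ≠ u → w ≠ v → z ≠ u → z ≠ v → (G.Adj w z ↔ w ≠ z ∧ σ w = z)

lemma exists_isHubPair [Fintype V] (h : dissNum G + 2 = Fintype.card V) :
    ∃ u v σ, IsHubPair G u v σ := by
  obtain ⟨S, hS, hcard⟩ := exists_isDissocSet_ncard_eq_dissNum G
  have hcompl : Sᶜ.ncard = 2 := by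
    have := ncard_add_ncard_compl S
    rw [Nat.card_eq_fintype_card] at this
    omega
  obtain ⟨u, v, huv, hSc⟩ := ncard_eq_two.mp hcompl
  obtain ⟨σ, hσ, hfix, hadj⟩ := hS.exists_involutive
  have hmem (w : V) : w ∈ S ↔ w ≠ u ∧ w ≠ v := by
    rw [← notMem_compl_iff, hSc]
    simp
  exact ⟨u, v, σ, huv, hσ, hfix u (by simp [hmem]), hfix v (by simp [hmem]),
    fun hwu hwv hzu hzv ↦ hadj _ ((hmem _).mpr ⟨hwu, hwv⟩) _ ((hmem _).mpr ⟨hzu, hzv⟩)⟩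

namespace IsHubPair

lemma map_ne_left (h : IsHubPair G u v σ) {w : V} (hw : w ≠ u) : σ w ≠ u :=
  fun hwu ↦ hw (by rw [← h.involutive w, hwu, h.map_left])

lemma map_ne_right (h : IsHubPair G u v σ) {w : V} (hw : w ≠ v) : σ w ≠ v :=
  fun hwv ↦ hw (by rw [← h.involutive w, hwv, h.map_right])

lemma adj_map (h : IsHubPair G u v σ) {w : V} (hu : w ≠ u) (hv : w ≠ v) (hw : σ w ≠ w) :
    G.Adj w (σ w) :=
  (h.adj_iff hu hv (h.map_ne_left hu) (h.map_ne_right hv)).mpr ⟨hw.symm, rfl⟩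

lemma adj_hub_or_adj_hub_map (h : IsHubPair G u v σ) (hG : G.Connected) {w : V} (hu : w ≠ u)
    (hv : w ≠ v) : (G.Adj u w ∨ G.Adj v w) ∨ G.Adj u (σ w) ∨ G.Adj v (σ w) := by
  obtain ⟨⟨⟨a, b⟩, hab⟩, -, ha, hb⟩ := (hG.preconnected w u).some.exists_boundary_dart {w, σ w}
    (by simp) (by simp [hu.symm, (h.map_ne_left hu).symm])
  have hb_hub : b = u ∨ b = v := by
    by_contra! hb'
    have := h.involutive w
    have := h.map_ne_left hu
    have := h.map_ne_right hv
    have := (h.adj_iff (by grind) (by grind) hb'.1 hb'.2).mp hab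
    grind
  have hba := hab.symm
  grind

lemma adj_or_exists_adj (h : IsHubPair G u v σ) (hG : G.Connected) :
    G.Adj u v ∨ ∃ w, w ≠ u ∧ w ≠ v ∧ G.Adj u w ∧ (G.Adj v w ∨ G.Adj v (σ w)) := by
  obtain ⟨⟨⟨a, b⟩, hab⟩, -, ha, hb⟩ := (hG.preconnected u v).some.exists_boundary_dart
    {w | w = u ∨ w ≠ v ∧ (G.Adj u w ∨ G.Adj u (σ w))} (by simp) (by simp [h.ne.symm])
  by_cases hau : a = u
  · grind
  have hav : a ≠ v := by grind
  have hbv : b = v := by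
    by_contra hbv
    have := h.involutive a
    have := (h.adj_iff hau hav (by grind) hbv).mp hab
    grind
  have hva : G.Adj v a := hbv ▸ hab.symm
  right
  by_cases hua : G.Adj u a
  · exact ⟨a, hau, hav, hua, .inl hva⟩
  · exact ⟨σ a, h.map_ne_left hau, h.map_ne_right hav, by grind, .inr (by rwa [h.involutive])⟩

end IsHubPair

lemma exists_transversal {σ : V → V} (hσ : σ.Involutive) (P : V → Prop) :
    ∃ T : Set V, ∀ w, P w ∨ P (σ w) → (w ∈ T → P w) ∧ (σ w ≠ w → (σ w ∈ T ↔ w ∉ T)) := by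
  have hex (z : Sym2 V) : ∃ w, (∃ w ∈ z, P w) → w ∈ z ∧ P w := by
    by_cases h : ∃ w ∈ z, P w
    · exact h.imp fun w hw _ ↦ hw
    · exact ⟨z.out.1, fun h' ↦ absurd h' h⟩
  choose g hg using hex
  refine ⟨{w | g s(w, σ w) = w}, fun w hw ↦ ?_⟩
  obtain ⟨hgw, hP⟩ := hg s(w, σ w) (by simpa)
  have hswap : s(σ w, σ (σ w)) = s(w, σ w) := by rw [hσ, Sym2.eq_swap]
  rw [Sym2.mem_iff] at hgw
  simp only [mem_ofPred_eq, hswap]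
  grind

/-- The map that combines `φ`, the inclusion of `R`, and the two maps `w ↦ w` and `w ↦ σ w` on `S`.
It serves to match the vertices of a graph `attachPendants L α β` with those of a given graph. -/
def spanningMap {ι : Type*} (φ : ι → V) (σ : V → V) (R S : Set V) : ι ⊕ (R ⊕ S × Fin 2) → V :=
  Sum.elim φ (Sum.elim (↑) fun (s, k) ↦ if k = 0 then s else σ s)

lemma bijective_spanningMap {ι : Type*} {φ : ι → V} (hφ : φ.Injective) (hσ : σ.Involutive)
    (hrange : ∀ i, σ (φ i) ∈ range φ) {T : Set V}
    (hT : ∀ w ∉ range φ, σ w ≠ w → (σ w ∈ T ↔ w ∉ T)) :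
    (spanningMap φ σ {w | w ∉ range φ ∧ σ w = w}
      {w | w ∉ range φ ∧ σ w ≠ w ∧ w ∈ T}).Bijective := by
  have hσφ {w : V} (hw : w ∉ range φ) : σ w ∉ range φ := fun ⟨i, hi⟩ ↦
    hw (hσ w ▸ hi ▸ hrange i)
  constructor
  · refine hφ.sumElim (Subtype.val_injective.sumElim ?_ ?_) ?_
    · rintro ⟨⟨s, hs, hne, hsT⟩, k⟩ ⟨⟨s', hs', hne', hsT'⟩, k'⟩ h
      have := hσ s
      have := hσ s'
      have := hT s hs hne
      have := hT s' hs' hne'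
      grind
    · rintro ⟨r, hr, hfix⟩ ⟨⟨s, hs, hne, hsT⟩, k⟩ h
      have := hσ s
      grind
    · rintro i (⟨r, hr, hfix⟩ | ⟨⟨s, hs, hne, hsT⟩, k⟩) h
      · exact hr ⟨i, h⟩
      · have := hσφ hs
        grind
  · intro w
    by_cases hw : w ∈ range φ
    · obtain ⟨i, rfl⟩ := hw
      exact ⟨.inl i, rfl⟩
    by_cases hfix : σ w = w
    · exact ⟨.inr (.inl ⟨w, hw, hfix⟩), rfl⟩
    by_cases hwT : w ∈ T
    · exact ⟨.inr (.inr (⟨w, hw, hfix, hwT⟩, 0)), rfl⟩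
    · exact ⟨.inr (.inr (⟨σ w, hσφ hw, by rwa [hσ, ne_comm], (hT w hw hfix).mpr hwT⟩, 1)), hσ w⟩

lemma IsHubPair.exists_attachPendants_le [Finite V] (h : IsHubPair G u v σ) (hG : G.Connected)
    {ι : Type} {L : SimpleGraph ι} {x y : ι} (φ : L →g G) (hφ : φ.toFun.Injective) (hx : φ x = u)
    (hy : φ y = v) (hσ : ∀ i, σ (φ i) ∈ range φ) :
    ∃ (R S : Type) (_ : Fintype R) (_ : Fintype S) (α : R → ι) (β : S → ι)
      (e : ι ⊕ (R ⊕ S × Fin 2) ≃ V), (∀ r, α r = x ∨ α r = y) ∧ (∀ s, β s = x ∨ β s = y) ∧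
        attachPendants L α β ≤ G.comap e := by
  classical
  obtain ⟨T, hT⟩ := exists_transversal h.involutive fun w ↦ G.Adj u w ∨ G.Adj v w
  have hu {w : V} (hw : w ∉ range φ) : w ≠ u := by rintro rfl; exact hw ⟨x, hx⟩
  have hv {w : V} (hw : w ∉ range φ) : w ≠ v := by rintro rfl; exact hw ⟨y, hy⟩
  have hadj {w : V} (hw : w ∉ range φ) := h.adj_hub_or_adj_hub_map hG (hu hw) (hv hw)
  let hub (w : V) : ι := if G.Adj u w then x else y
  have hhub (w : V) : hub w = x ∨ hub w = y := by grind
  have hadj_hub {w : V} (hw : G.Adj u w ∨ G.Adj v w) : G.Adj (φ (hub w)) w := by grind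
  let R := {w | w ∉ range φ ∧ σ w = w}
  let S := {w | w ∉ range φ ∧ σ w ≠ w ∧ w ∈ T}
  have hR (r : R) : G.Adj (φ (hub r)) r := hadj_hub (by simpa [r.2.2] using hadj r.2.1)
  have hS (s : S) : G.Adj (φ (hub s)) s := hadj_hub ((hT s (hadj s.2.1)).1 s.2.2.2)
  have hpath (s : S) : G.Adj s (σ s) := h.adj_map (hu s.2.1) (hv s.2.1) s.2.2.1
  refine ⟨R, S, .ofFinite R, .ofFinite S, fun r ↦ hub r, fun s ↦ hub s, .ofBijective _
    (bijective_spanningMap hφ h.involutive hσ fun w hw hfix ↦ (hT w (hadj hw)).2 hfix),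
    fun r ↦ hhub r, fun s ↦ hhub s, ?_⟩
  rintro (i | r | ⟨s, k⟩) (j | r' | ⟨s', k'⟩) hij
  · exact φ.map_adj hij
  · obtain rfl := hij
    exact hR r'
  · obtain ⟨rfl, rfl⟩ := hij
    exact hS s'
  · obtain rfl := hij
    exact (hR r).symm
  · exact hij.elim
  · exact hij.elim
  · obtain ⟨rfl, rfl⟩ := hij
    exact (hS s).symm
  · exact hij.elim
  · obtain ⟨rfl, hk⟩ := hij
    fin_cases k <;> fin_cases k'
    exacts [hk rfl |>.elim, hpath s, (hpath s).symm, hk rfl |>.elim]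

end HubPair

/-! ### The minimizers of the spectral radius -/

section Extremal

open SimpleGraph

lemma ncard_fiber_add_ncard_fiber {ι R : Type*} [Finite R] {x y : ι} (hxy : x ≠ y) {α : R → ι}
    (hα : ∀ r, α r = x ∨ α r = y) :
    (α ⁻¹' {x}).ncard + (α ⁻¹' {y}).ncard = Nat.card R := by
  rw [← ncard_univ, ← ncard_union_eq]
  · exact congr_arg ncard (eq_univ_of_forall fun r ↦ hα r)
  · exact (disjoint_singleton.mpr hxy).preimage α

lemma card_add_ncard_fibers {ι R S V : Type*} [Finite ι] [Finite R] [Finite S]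
    (e : ι ⊕ (R ⊕ S × Fin 2) ≃ V) {x y : ι} (hxy : x ≠ y) {α : R → ι} {β : S → ι}
    (hα : ∀ r, α r = x ∨ α r = y) (hβ : ∀ s, β s = x ∨ β s = y) :
    Nat.card ι + ((α ⁻¹' {x}).ncard + (α ⁻¹' {y}).ncard +
      2 * ((β ⁻¹' {x}).ncard + (β ⁻¹' {y}).ncard)) = Nat.card V := by
  rw [ncard_fiber_add_ncard_fiber hxy hα, ncard_fiber_add_ncard_fiber hxy hβ, ← Nat.card_congr e]
  simp [Nat.card_sum, mul_comm]

lemma specRad_G3_le {r s p q : ℕ} {t : ℝ} (ht : 1 < t) (hpos : 0 < slack t 1 s r)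
    (h : slack t 1 s r * slack t 1 q p = (1 / t) ^ 2) : specRad (G3 r s p q) ≤ t := by
  have hne : (0 : Fin 4) ≠ 3 := by decide
  have hleft := ncard_preimage_sumElim_const_left hne
  have hright := ncard_preimage_sumElim_const_right hne
  obtain ⟨e⟩ := nonempty_G3_iso_attachPendants r s p q
  obtain ⟨Z, hZ, hZt⟩ := (isLink_pathGraph_four ht).exists_eigenvector ht
    (α := Sum.elim (fun _ : Fin r ↦ 0) (fun _ : Fin p ↦ 3))
    (β := Sum.elim (fun _ : Fin s ↦ 0) (fun _ : Fin q ↦ 3)) (by simp) (by simp) (by positivity)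
    (by rwa [hleft, hleft]) (by rwa [hleft, hleft, hright, hright])
  rw [specRad_congr e]
  exact specRad_le_of_mulVec_le (by linarith) hZ hZt.le

variable {V : Type} [Fintype V] {G : SimpleGraph V} {u v w : V} {σ : V → V} {t : ℝ} {s q p : ℕ}

namespace IsHubPair

lemma exists_two_mul_le_slack_add_slack (h : IsHubPair G u v σ) (hG : G.Connected) {ι : Type}
    [Fintype ι] {L : SimpleGraph ι} {x y : ι} {c m : ℝ} (hL : IsLink L x y t c m) (ht : 1 < t)
    (hGt : specRad G ≤ t) (φ : L →g G) (hφ : φ.toFun.Injective) (hx : φ x = u) (hy : φ y = v)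
    (hσ : ∀ i, σ (φ i) ∈ range φ) :
    ∃ κ₁ ρ₁ κ₂ ρ₂ : ℕ, Nat.card ι + (ρ₁ + ρ₂ + 2 * (κ₁ + κ₂)) = Nat.card V ∧
      2 * m ≤ slack t c κ₁ ρ₁ + slack t c κ₂ ρ₂ := by
  obtain ⟨R, S, _, _, α, β, e, hα, hβ, hle⟩ := h.exists_attachPendants_le hG φ hφ hx hy hσ
  rw [← specRad_congr (Iso.comap e G)] at hGt
  exact ⟨_, _, _, _, card_add_ncard_fibers e hL.ne hα hβ,
    hL.two_mul_le_slack_add_slack ht hα hβ hle hGt⟩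

lemma not_adj_hubs (h : IsHubPair G u v σ) (hG : G.Connected)
    (hcard : Fintype.card V = 4 + (p + 2 * (s + q))) (hb : IsBalanced t s q p)
    (hGt : specRad G ≤ t) : ¬ G.Adj u v := by
  intro huv
  let φ : pathGraph 2 →g G := ⟨![u, v], by
    simp [Fin.forall_fin_two, pathGraph_adj, huv, huv.symm]⟩
  obtain ⟨κ₁, ρ₁, κ₂, ρ₂, hsum, hle⟩ := h.exists_two_mul_le_slack_add_slack hG
    (isLink_pathGraph_two hb.one_lt) hb.one_lt hGt φ
    (by simp [φ, Function.Injective, Fin.forall_fin_two, h.ne, h.ne.symm]) rfl rfl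
    (by simp [φ, Fin.forall_fin_two, h.map_left, h.map_right])
  rw [Nat.card_fin, Nat.card_eq_fintype_card] at hsum
  exact (hb.slack_add_slack_lt_pathGraph_two (by omega)).not_ge hle

lemma not_adj_of_map_eq (h : IsHubPair G u v σ) (hG : G.Connected)
    (hcard : Fintype.card V = 4 + (p + 2 * (s + q))) (hb : IsBalanced t s q p)
    (hGt : specRad G ≤ t) (huw : G.Adj u w) (hw : σ w = w) : ¬ G.Adj v w := by
  intro hvw
  let φ : pathGraph 3 →g G := ⟨![u, w, v], by
    simp [Fin.forall_fin_succ, pathGraph_adj, huw, hvw, huw.symm, hvw.symm]⟩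
  obtain ⟨κ₁, ρ₁, κ₂, ρ₂, hsum, hle⟩ := h.exists_two_mul_le_slack_add_slack hG
    (isLink_pathGraph_three hb.one_lt) hb.one_lt hGt φ
    (by simp [φ, Function.Injective, Fin.forall_fin_succ, h.ne, h.ne.symm, huw.ne, hvw.ne,
      huw.ne', hvw.ne']) rfl rfl
    (by simp [φ, Fin.forall_fin_succ, h.map_left, h.map_right, hw])
  rw [Nat.card_fin, Nat.card_eq_fintype_card] at hsum
  exact (hb.slack_add_slack_lt_pathGraph_three (by omega)).not_ge hle

lemma not_adj_of_map_ne (h : IsHubPair G u v σ) (hG : G.Connected)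
    (hcard : Fintype.card V = 4 + (p + 2 * (s + q))) (hb : IsBalanced t s q p)
    (hGt : specRad G ≤ t) (huw : G.Adj u w) (hw : σ w ≠ w) : ¬ G.Adj v w := by
  intro hvw
  have hwσ := h.adj_map huw.ne' hvw.ne' hw
  have hu := h.map_ne_left huw.ne'
  have hv := h.map_ne_right hvw.ne'
  let φ : starGraph (0 : Fin 4) →g G := ⟨![w, u, v, σ w], by
    simp [Fin.forall_fin_succ, huw, hvw, hwσ, huw.symm, hvw.symm, hwσ.symm]⟩
  obtain ⟨κ₁, ρ₁, κ₂, ρ₂, hsum, hle⟩ := h.exists_two_mul_le_slack_add_slack hG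
    (isLink_starGraph hb.one_lt) hb.one_lt hGt φ
    (by simp [φ, Function.Injective, Fin.forall_fin_succ, h.ne, h.ne.symm, huw.ne, hvw.ne,
      huw.ne', hvw.ne', hw, hw.symm, hu, hu.symm, hv, hv.symm]) rfl rfl
    (by simp [φ, Fin.forall_fin_succ, h.map_left, h.map_right, h.involutive w])
  rw [Nat.card_fin, Nat.card_eq_fintype_card] at hsum
  exact (hb.slack_add_slack_lt_starGraph (by omega)).not_ge hle

end IsHubPair

lemma nonempty_iso_G3_of_attachPendants_le {R S : Type} [Fintype R] [Fintype S] {α : R → Fin 4}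
    {β : S → Fin 4} (hα : ∀ r, α r = 0 ∨ α r = 3) (hβ : ∀ s, β s = 0 ∨ β s = 3)
    {H : SimpleGraph (Fin 4 ⊕ (R ⊕ S × Fin 2))} (hle : attachPendants (pathGraph 4) α β ≤ H)
    (hcard : (α ⁻¹' {0}).ncard + (α ⁻¹' {3}).ncard +
      2 * ((β ⁻¹' {0}).ncard + (β ⁻¹' {3}).ncard) = p + 2 * (s + q))
    (hb : IsBalanced t s q p) (hHt : specRad H ≤ t) : Nonempty (H ≃g G3 0 s p q) := by
  have ht := hb.one_lt
  have ht₀ : 0 < 1 / t := by positivity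
  have hp := hb.le_one
  have hL := isLink_pathGraph_four ht
  have hmin : ¬ (β ⁻¹' {0}).ncard + (β ⁻¹' {3}).ncard < s + q := fun hlt ↦
    (hb.slack_add_slack_lt_pathGraph_four hcard hlt).not_ge
      (hL.two_mul_le_slack_add_slack ht hα hβ hle hHt)
  have hprod_le := hL.sq_le_slack_mul_slack ht hα hβ hle hHt ht₀
  have heq (hpos : 0 < slack t 1 (β ⁻¹' {0}).ncard (α ⁻¹' {0}).ncard)
      (hprod : slack t 1 (β ⁻¹' {0}).ncard (α ⁻¹' {0}).ncard *
        slack t 1 (β ⁻¹' {3}).ncard (α ⁻¹' {3}).ncard = (1 / t) ^ 2) :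
      attachPendants (pathGraph 4) α β = H := by
    obtain ⟨Z, hZ, hZt⟩ := hL.exists_eigenvector ht hα hβ ht₀ hpos hprod
    exact eq_of_le_of_specRad_le hle hZ hZt hHt
  obtain ⟨e⟩ := nonempty_attachPendants_iso_G3 hα hβ
  rcases hb.eq_of_le_slack_mul_slack (by omega) (by omega) hprod_le with
    ⟨hκ₁, hρ₁, hκ₂, hρ₂⟩ | ⟨hκ₁, hρ₁, hκ₂, hρ₂⟩
  all_goals rw [hκ₁, hρ₁, hκ₂, hρ₂] at heq e
  · exact ⟨heq hb.slack_pos_left hb.slack_mul_slack ▸ e⟩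
  · obtain ⟨e'⟩ := nonempty_G3_iso_G3_swap p q 0 s
    exact ⟨heq hb.slack_pos_right (by rw [mul_comm, hb.slack_mul_slack]) ▸ e.trans e'⟩

lemma IsHubPair.nonempty_iso_G3 (h : IsHubPair G u v σ) (hG : G.Connected)
    (hcard : Fintype.card V = 4 + (p + 2 * (s + q))) (hb : IsBalanced t s q p)
    (hGt : specRad G ≤ t) (hwv : w ≠ v) (huw : G.Adj u w) (hvw : G.Adj v (σ w)) (hw : σ w ≠ w) :
    Nonempty (G ≃g G3 0 s p q) := by
  have hwσ := h.adj_map huw.ne' hwv hw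
  have hu := h.map_ne_left huw.ne'
  let φ : pathGraph 4 →g G := ⟨![u, w, σ w, v], by
    simp [Fin.forall_fin_succ, pathGraph_adj, huw, hvw, hwσ, huw.symm, hvw.symm, hwσ.symm]⟩
  obtain ⟨R, S, _, _, α, β, e, hα, hβ, hle⟩ := h.exists_attachPendants_le hG φ
    (by simp [φ, Function.Injective, Fin.forall_fin_succ, h.ne, h.ne.symm, huw.ne, hvw.ne,
      huw.ne', hvw.ne', hw, hw.symm, hu, hu.symm, hwv, hwv.symm])
    (rfl : φ 0 = u) (rfl : φ 3 = v)
    (by simp [φ, Fin.forall_fin_succ, h.map_left, h.map_right, h.involutive w])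
  have hsum := card_add_ncard_fibers e (by decide) hα hβ
  rw [Nat.card_fin, Nat.card_eq_fintype_card, hcard] at hsum
  rw [← specRad_congr (Iso.comap e G)] at hGt
  obtain ⟨e'⟩ := nonempty_iso_G3_of_attachPendants_le hα hβ hle (add_left_cancel hsum) hb hGt
  exact ⟨(Iso.comap e G).symm.trans e'⟩

theorem nonempty_iso_G3_of_specRad_le (hG : G.Connected) (hdiss : dissNum G + 2 = Fintype.card V)
    (hcard : Fintype.card V = 4 + (p + 2 * (s + q))) (hs : 2 ≤ s) (hqs : q ≤ s)
    (hsq : s ≤ q + 1) (hp : p ≤ 1) (hspec : specRad G ≤ specRad (G3 0 s p q)) :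
    Nonempty (G ≃g G3 0 s p q) := by
  obtain ⟨t, hb⟩ := exists_isBalanced hs hqs hsq hp
  have hGt : specRad G ≤ t :=
    hspec.trans (specRad_G3_le hb.one_lt hb.slack_pos_left hb.slack_mul_slack)
  obtain ⟨u, v, σ, h⟩ := exists_isHubPair hdiss
  rcases h.adj_or_exists_adj hG with huv | ⟨w, -, hwv, huw, hvw⟩
  · exact absurd huv (h.not_adj_hubs hG hcard hb hGt)
  by_cases hw : σ w = w
  · rw [hw, or_self] at hvw
    exact absurd hvw (h.not_adj_of_map_eq hG hcard hb hGt huw hw)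
  rcases hvw with hvw | hvw
  · exact absurd hvw (h.not_adj_of_map_ne hG hcard hb hGt huw hw)
  · exact h.nonempty_iso_G3 hG hcard hb hGt hwv huw hvw hw

lemma specRad_le_specRad_G3 {n r : ℕ} (hn : n = 4 + r + p + 2 * (s + q)) (hs : 2 ≤ s) (hq : 1 ≤ q)
    (hmin : ∀ H : SimpleGraph (Fin n), H.Connected → dissNum H = n - 2 →
      specRad G ≤ specRad H) : specRad G ≤ specRad (G3 r s p q) := by
  let e : Fin n ≃ Fin 4 ⊕ ((Fin r ⊕ Fin s × Fin 2) ⊕ (Fin p ⊕ Fin q × Fin 2)) :=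
    (Fintype.equivFinOfCardEq (by simp; omega)).symm
  rw [← specRad_congr (Iso.comap e (G3 r s p q))]
  refine hmin _ ((Iso.comap e _).connected_iff.mpr (connected_G3 r s p q)) ?_
  rw [dissNum_congr (Iso.comap e _), dissNum_G3 hs hq]
  omega

end Extremal

/-- If a connected graph `G` of order `n ≥ 10` with dissociation number `n-2` attains the
minimum spectral radius among all connected graphs of order `n` with dissociation number
`n-2`, then `G ≅ H(n)`.  Here, for even `n`, `H(n) = G3 0 ⌈(n-4)/4⌉ 0 ⌊(n-4)/4⌋` is the
tree obtained from a path on 4 vertices by attaching `⌈(n-4)/4⌉` pendant 2-paths to one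
end and `⌊(n-4)/4⌋` pendant 2-paths to the other end (so that `H(n)` has order `n`); for
odd `n`, `H(n) = G3 0 ⌈(n-5)/4⌉ 1 ⌊(n-5)/4⌋` is obtained from `H(n-1)` by attaching one
pendant vertex to the branch vertex of smaller degree. -/
theorem minimum_spectral_radius_diss_eq_card_sub_two
    {n : ℕ} (hn : 10 ≤ n) {V : Type} [Fintype V] (G : SimpleGraph V)
    (hcard : Fintype.card V = n) (hconn : G.Connected) (hdiss : dissNum G = n - 2)
    (hmin : ∀ H : SimpleGraph (Fin n), H.Connected → dissNum H = n - 2 →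
      specRad G ≤ specRad H) :
    (Even n → Nonempty (G ≃g G3 0 ((n - 4 + 3) / 4) 0 ((n - 4) / 4))) ∧
    (Odd n → Nonempty (G ≃g G3 0 ((n - 5 + 3) / 4) 1 ((n - 5) / 4))) := by
  have hdiss' : dissNum G + 2 = Fintype.card V := by omega
  refine ⟨fun ⟨k, hk⟩ ↦ ?_, fun ⟨k, hk⟩ ↦ ?_⟩
  all_goals
    refine nonempty_iso_G3_of_specRad_le hconn hdiss' (by omega) (by omega) (by omega) (by omega)
      (by omega) (specRad_le_specRad_G3 (by omega) (by omega) (by omega) hmin)
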